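/- arXiv:2512.22696 — 2 statements merged into one kernel-verified Lean document; each statement's English description precedes it below -/
import Mathlib

section
/- The triangle with side lengths (195, 275, 245) tiles into 3575 congruent copies of the triangle with side lengths (3, 5, 7). -/
/-!
Let `c ^ 2 = a ^ 2 + a * b + b ^ 2`, so that the tile with sides `a`, `b`, `c` has an angle of 120
degrees. Two tiles form a parallelogram with sides `a` and `b`. The tile scaled by `b`, by `c` and
by `a`, side by side, forms a trapezoid of slant height `a * b` cut off from an equilateral
triangle, and parallelograms of both orientations lengthen this trapezoid until its bases are
multiples of `a * b`. Stacking such trapezoids, and then arranging three stacks as a pinwheel,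
tiles an equilateral triangle of side `2 * a * b * k` for every sufficiently large `k`. Finally, a
triangle with sides `k * a * (a + 2 * b)` and `k * b * (2 * a + b)` enclosing an angle of 60
degrees splits into this equilateral triangle and copies of the tile scaled by `a * k`, `b * k` and
`c * k`, which meet in the midpoint of the side of the equilateral triangle opposite to that angle.
The third side is `k * c ^ 2`, and the theorem is the case `(a, b, c, k) = (3, 5, 7, 5)`.
-/

noncomputable section

abbrev Plane := EuclideanSpace ℝ (Fin 2)

/-- The point (x, y) in the Euclidean plane. -/
def pt (x y : ℝ) : Plane := (WithLp.equiv 2 (Fin 2 → ℝ)).symm ![x, y]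

/-- `Δ` is a triangle with side lengths `(p, q, r)`: the convex hull of points `P, Q, R`
with `dist Q R = p`, `dist P R = q`, `dist P Q = r`. -/
def IsTriangle (p q r : ℝ) (Δ : Set Plane) : Prop :=
  ∃ P Q R : Plane, dist Q R = p ∧ dist P R = q ∧ dist P Q = r ∧
    Δ = convexHull ℝ {P, Q, R}

/-- `S` tiles into `N` congruent copies of the `(p, q, r)` triangle: there are isometries
`f 1, …, f N` of the plane and a triangle `Δ` with side lengths `(p, q, r)` such that
`S` is the union of the `f i '' Δ` and their interiors are pairwise disjoint. -/
def TilesInto (S : Set Plane) (N : ℕ) (p q r : ℝ) : Prop :=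
  ∃ (f : Fin N → Plane ≃ᵢ Plane) (Δ : Set Plane),
    IsTriangle p q r Δ ∧
    S = ⋃ i, f i '' Δ ∧
    ∀ i j : Fin N, i ≠ j → interior (f i '' Δ) ∩ interior (f j '' Δ) = ∅

open Set Function
open scoped Pointwise

section TiledBy

variable {X Y : Type*} [TopologicalSpace X] [TopologicalSpace Y]

/-- `TiledBy C n S`: the set `S` is the union of `n` sets of the class `C` with pairwise disjoint
interiors. The tiles are indexed by an arbitrary finite type, so that disjoint unions of tilings are
indexed by sum types. -/
def TiledBy (C : Set X → Prop) (n : ℕ) (S : Set X) : Prop :=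
  ∃ (ι : Type) (_ : Fintype ι) (T : ι → Set X), Fintype.card ι = n ∧ (∀ i, C (T i)) ∧
    S = ⋃ i, T i ∧ Pairwise (Disjoint on fun i => interior (T i))

variable {C : Set X → Prop} {m n : ℕ} {S S' : Set X}

theorem TiledBy.of_mem (h : C S) : TiledBy C 1 S :=
  ⟨Unit, inferInstance, fun _ => S, rfl, fun _ => h, (iUnion_const S).symm,
    fun i j hij => (hij (Subsingleton.elim i j)).elim⟩

theorem TiledBy.iUnion {κ : Type} [Fintype κ] {n : κ → ℕ} {S : κ → Set X}
    (h : ∀ k, TiledBy C (n k) (S k)) (hd : Pairwise (Disjoint on fun k => interior (S k))) :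
    TiledBy C (∑ k, n k) (⋃ k, S k) := by
  choose ι hι T hcard hT hS hTd using h
  have hsub (k : κ) (i : ι k) : interior (T k i) ⊆ interior (S k) :=
    interior_mono (hS k ▸ subset_iUnion (T k) i)
  refine ⟨Σ k, ι k, inferInstance, fun i => T i.1 i.2, ?_, fun i => hT i.1 i.2, ?_, ?_⟩
  · rw [Fintype.card_sigma]
    exact Finset.sum_congr rfl fun k _ => hcard k
  · rw [iUnion_sigma]
    exact iUnion_congr hS
  · rintro ⟨k, i⟩ ⟨l, j⟩ hij
    rcases eq_or_ne k l with rfl | hkl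
    · exact hTd k (ne_of_apply_ne (Sigma.mk k) hij)
    · exact (hd hkl).mono (hsub k i) (hsub l j)

theorem TiledBy.union (h : TiledBy C m S) (h' : TiledBy C n S')
    (hd : Disjoint (interior S) (interior S')) : TiledBy C (m + n) (S ∪ S') := by
  have key := TiledBy.iUnion (C := C) (κ := Bool) (n := fun b => cond b m n)
    (S := fun b => cond b S S') (Bool.forall_bool.2 ⟨h', h⟩)
    (by simpa only [Bool.apply_cond interior] using pairwise_disjoint_on_bool.2 hd)
  rwa [← union_eq_iUnion, Fintype.sum_bool] at key

theorem TiledBy.union₃ {k : ℕ} {S'' : Set X} (h : TiledBy C m S) (h' : TiledBy C n S')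
    (h'' : TiledBy C k S'') (hd : Disjoint (interior S) (interior S'))
    (hd' : Disjoint (interior S) (interior S'')) (hd'' : Disjoint (interior S') (interior S'')) :
    TiledBy C (m + n + k) (S ∪ S' ∪ S'') := by
  have key := TiledBy.iUnion (C := C) (κ := Fin 3) (n := ![m, n, k]) (S := ![S, S', S''])
    (by simp [Fin.forall_fin_succ, h, h', h''])
    (by simp [Pairwise, Fin.forall_fin_succ, onFun, hd, hd', hd'', hd.symm, hd'.symm, hd''.symm])
  have hS : ⋃ i, ![S, S', S''] i = S ∪ S' ∪ S'' := by
    ext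
    simp [Fin.exists_fin_succ, or_assoc]
  rwa [hS, Fin.sum_univ_three] at key

theorem TiledBy.image {D : Set Y → Prop} (e : X ≃ₜ Y) (hCD : ∀ T, C T → D (e '' T))
    (h : TiledBy C n S) : TiledBy D n (e '' S) := by
  obtain ⟨ι, _, T, hn, hT, rfl, hd⟩ := h
  refine ⟨ι, inferInstance, fun i => e '' T i, hn, fun i => hCD _ (hT i), image_iUnion, ?_⟩
  intro i j hij
  simpa only [onFun, ← e.image_interior, disjoint_image_iff e.injective] using hd hij

end TiledBy

theorem disjoint_interior_of_separated {E : Type*} [AddCommGroup E] [Module ℝ E]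
    [TopologicalSpace E] [ContinuousSMul ℝ E] [ContinuousAdd E] {f : E →L[ℝ] ℝ} (hf : f ≠ 0) {c : ℝ}
    {S S' : Set E} (hS : ∀ x ∈ S, f x ≤ c) (hS' : ∀ x ∈ S', c ≤ f x) :
    Disjoint (interior S) (interior S') := by
  rw [disjoint_iff_inter_eq_empty, ← interior_inter, ← not_nonempty_iff_eq_empty]
  intro hne
  have hopen : IsOpen (f '' interior (S ∩ S')) := f.isOpenMap_of_ne_zero hf _ isOpen_interior
  have hsub : f '' interior (S ∩ S') ⊆ {c} := by
    rintro _ ⟨x, hx, rfl⟩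
    exact le_antisymm (hS x (interior_subset hx).1) (hS' x (interior_subset hx).2)
  have hempty := hopen.subset_interior_iff.2 hsub
  rw [interior_singleton, subset_empty_iff, image_eq_empty] at hempty
  exact hne.ne_empty hempty

/-- A class of sets stable under translations. -/
def TranslationInvariant {V : Type*} [AddGroup V] (C : Set V → Prop) : Prop :=
  ∀ (p : V) (T : Set V), C T → C (p +ᵥ T)

theorem TiledBy.vadd {V : Type*} [AddGroup V] [TopologicalSpace V] [ContinuousConstVAdd V V]
    {C : Set V → Prop} (hC : TranslationInvariant C) {n : ℕ} {S : Set V} (p : V)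
    (hS : TiledBy C n S) : TiledBy C n (p +ᵥ S) :=
  hS.image (Homeomorph.vadd p) (hC p)

section ConvexHull

variable {E : Type*} [AddCommGroup E] [Module ℝ E] {A B C D P Q R X : E}

theorem segment_union_segment (hX : X ∈ segment ℝ P Q) :
    segment ℝ P X ∪ segment ℝ X Q = segment ℝ P Q := by
  rw [segment_eq_image_lineMap] at hX
  obtain ⟨t, ⟨ht0, ht1⟩, rfl⟩ := hX
  have hl : segment ℝ P (AffineMap.lineMap P Q t) = AffineMap.lineMap P Q '' Icc 0 t := by
    rw [← segment_eq_Icc ht0, image_segment, AffineMap.lineMap_apply_zero]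
  have hr : segment ℝ (AffineMap.lineMap P Q t) Q = AffineMap.lineMap P Q '' Icc t 1 := by
    rw [← segment_eq_Icc ht1, image_segment, AffineMap.lineMap_apply_one]
  rw [hl, hr, ← image_union, Icc_union_Icc_eq_Icc ht0 ht1, segment_eq_image_lineMap]

theorem convexHull_triple_union (hX : X ∈ segment ℝ Q R) :
    convexHull ℝ {P, Q, X} ∪ convexHull ℝ {P, X, R} = convexHull ℝ {P, Q, R} := by
  simp only [← convexJoin_singleton_segment, ← convexJoin_union_right, segment_union_segment hX]

theorem convexHull_triple_union_of_mem (hX : X ∈ convexHull ℝ {P, Q, R}) :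
    convexHull ℝ {Q, P, X} ∪ convexHull ℝ {X, Q, R} ∪ convexHull ℝ {R, P, X} =
      convexHull ℝ {P, Q, R} := by
  rw [← convexJoin_singleton_segment, convexJoin_singleton_left, mem_iUnion₂] at hX
  obtain ⟨Y, hY, hXY⟩ := hX
  calc _ = convexHull ℝ {Q, P, X} ∪ (convexHull ℝ {X, Q, Y} ∪ convexHull ℝ {X, Y, R}) ∪
        convexHull ℝ {R, P, X} := by
        rw [convexHull_triple_union hY]
    _ = (convexHull ℝ {Q, P, X} ∪ convexHull ℝ {Q, X, Y}) ∪
        (convexHull ℝ {R, P, X} ∪ convexHull ℝ {R, X, Y}) := by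
        rw [insert_comm X Q, insert_comm R X, pair_comm R Y]
        ac_rfl
    _ = convexHull ℝ {P, Q, Y} ∪ convexHull ℝ {P, Y, R} := by
        rw [convexHull_triple_union hXY, convexHull_triple_union hXY, insert_comm Q P,
          insert_comm R P, pair_comm R Y]
    _ = convexHull ℝ {P, Q, R} := convexHull_triple_union hY

theorem convexHull_insert_of_mem {s : Set E} (h : X ∈ convexHull ℝ s) :
    convexHull ℝ (insert X s) = convexHull ℝ s :=
  Subset.antisymm
    (convexHull_min (insert_subset h (subset_convexHull ℝ s)) (convex_convexHull ℝ s))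
    (convexHull_mono (subset_insert X s))

theorem convexHull_quadruple_union (hAC : X ∈ segment ℝ A C) (hBD : X ∈ segment ℝ B D) :
    convexHull ℝ {A, B, D} ∪ convexHull ℝ {C, B, D} = convexHull ℝ {A, B, C, D} := by
  have adjoin_crossing (Y : E) :
      convexHull ℝ {Y, B, D} = convexJoin ℝ (segment ℝ Y X) (segment ℝ B D) := by
    have hX : X ∈ convexHull ℝ {Y, B, D} :=
      segment_subset_convexHull (by simp) (by simp) hBD
    rw [convexJoin_segments, insert_comm Y X, convexHull_insert_of_mem hX]
  rw [adjoin_crossing, adjoin_crossing, segment_symm ℝ C, ← convexJoin_union_left,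
    segment_union_segment hAC, convexJoin_segments, insert_comm C B]

theorem convexHull_quadruple_union_triple {M : E} (hM : M ∈ segment ℝ C D)
    (hBD : X ∈ segment ℝ B D) (hAM : X ∈ segment ℝ A M) :
    convexHull ℝ {A, B, C, M} ∪ convexHull ℝ {A, M, D} = convexHull ℝ {A, B, C, D} := by
  have hABM : convexHull ℝ {B, A, M} ⊆ convexHull ℝ {A, B, C, M} :=
    convexHull_mono (by grind)
  have hABMD : convexHull ℝ {A, B, M, D} = convexHull ℝ {B, A, M} ∪ convexHull ℝ {A, M, D} := by
    rw [pair_comm M, insert_comm A, ← convexHull_quadruple_union hBD hAM, insert_comm D,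
      pair_comm D]
  calc _ = convexHull ℝ {A, B, C, M} ∪ convexHull ℝ {A, B, M, D} := by
        rw [hABMD, ← union_assoc, union_eq_left.2 hABM]
    _ = convexHull ℝ {A, B, C, D} := by
        simp only [← convexJoin_segments, ← convexJoin_union_right, segment_union_segment hM]

theorem convexHull_triple_union_of_cut {F Z : E} (hX : X ∈ segment ℝ R P) (hF : F ∈ segment ℝ R Q)
    (hZ : Z ∈ segment ℝ X F) :
    convexHull ℝ {P, Q, Z} ∪ convexHull ℝ {P, Z, X} ∪ convexHull ℝ {Z, Q, F} ∪
      convexHull ℝ {R, X, F} = convexHull ℝ {R, P, Q} := by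
  have hZmem : Z ∈ convexHull ℝ {R, P, Q} :=
    (convex_convexHull ℝ _).segment_subset (segment_subset_convexHull (by simp) (by simp) hX)
      (segment_subset_convexHull (by simp) (by simp) hF) hZ
  have hRP : convexHull ℝ {R, X, Z} ∪ convexHull ℝ {P, Z, X} = convexHull ℝ {P, R, Z} := by
    rw [pair_comm X, insert_comm R, insert_comm P, pair_comm P, convexHull_triple_union hX,
      insert_comm Z, pair_comm Z, insert_comm R]
  have hRQ : convexHull ℝ {R, Z, F} ∪ convexHull ℝ {Z, Q, F} = convexHull ℝ {Q, R, Z} := by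
    rw [insert_comm R Z, pair_comm Q F, convexHull_triple_union hF,
      insert_comm Z, pair_comm Z, insert_comm R]
  calc _ = convexHull ℝ {R, X, Z} ∪ convexHull ℝ {P, Z, X} ∪ convexHull ℝ {Z, P, Q} ∪
        (convexHull ℝ {R, Z, F} ∪ convexHull ℝ {Z, Q, F}) := by
        rw [← convexHull_triple_union hZ, pair_comm Q Z, insert_comm P Z]
        ac_rfl
    _ = convexHull ℝ {R, P, Q} := by
        rw [hRP, hRQ, convexHull_triple_union_of_mem hZmem]

end ConvexHull

section Separation

variable {C : Set (ℝ × ℝ) → Prop} {k l : ℕ} {s t S S' : Set (ℝ × ℝ)} {α β γ : ℝ}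

theorem disjoint_interior_of_le (hαβ : α ≠ 0 ∨ β ≠ 0) (hS : ∀ z ∈ S, α * z.1 + β * z.2 ≤ γ)
    (hS' : ∀ z ∈ S', γ ≤ α * z.1 + β * z.2) : Disjoint (interior S) (interior S') := by
  set f : ℝ × ℝ →L[ℝ] ℝ := α • .fst ℝ ℝ ℝ + β • .snd ℝ ℝ ℝ
  have hf : f ≠ 0 := by
    intro h0
    have hα : α = 0 := by simpa [f] using DFunLike.congr_fun h0 (1, 0)
    have hβ : β = 0 := by simpa [f] using DFunLike.congr_fun h0 (0, 1)
    exact hαβ.elim (· hα) (· hβ)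
  exact disjoint_interior_of_separated hf hS hS'

theorem TiledBy.union_of_le (α β γ : ℝ) (hαβ : α ≠ 0 ∨ β ≠ 0) (h : TiledBy C k S)
    (h' : TiledBy C l S') (hS : ∀ z ∈ S, α * z.1 + β * z.2 ≤ γ)
    (hS' : ∀ z ∈ S', γ ≤ α * z.1 + β * z.2) : TiledBy C (k + l) (S ∪ S') :=
  h.union h' (disjoint_interior_of_le hαβ hS hS')

theorem isLinearMap_mul_fst_add_mul_snd (α β : ℝ) :
    IsLinearMap ℝ fun z : ℝ × ℝ => α * z.1 + β * z.2 :=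
  ⟨fun _ _ => by simp only [Prod.fst_add, Prod.snd_add]; ring,
    fun _ _ => by simp only [Prod.smul_fst, Prod.smul_snd, smul_eq_mul]; ring⟩

theorem forall_mem_convexHull_le (hs : ∀ z ∈ s, α * z.1 + β * z.2 ≤ γ) :
    ∀ z ∈ convexHull ℝ s, α * z.1 + β * z.2 ≤ γ :=
  convexHull_min hs (convex_halfSpace_le (isLinearMap_mul_fst_add_mul_snd α β) γ)

theorem forall_mem_convexHull_ge (hs : ∀ z ∈ s, γ ≤ α * z.1 + β * z.2) :
    ∀ z ∈ convexHull ℝ s, γ ≤ α * z.1 + β * z.2 :=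
  convexHull_min hs (convex_halfSpace_ge (isLinearMap_mul_fst_add_mul_snd α β) γ)

theorem TiledBy.union_convexHull_of_le (α β γ : ℝ) (hαβ : α ≠ 0 ∨ β ≠ 0)
    (h : TiledBy C k (convexHull ℝ s)) (h' : TiledBy C l (convexHull ℝ t))
    (hs : ∀ z ∈ s, α * z.1 + β * z.2 ≤ γ) (ht : ∀ z ∈ t, γ ≤ α * z.1 + β * z.2) :
    TiledBy C (k + l) (convexHull ℝ s ∪ convexHull ℝ t) :=
  h.union_of_le α β γ hαβ h' (forall_mem_convexHull_le hs) (forall_mem_convexHull_ge ht)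

theorem exists_mul_eq_of_le {x t : ℝ} (hx : 0 ≤ x) (hxt : x ≤ t) :
    ∃ u, 0 ≤ u ∧ u ≤ 1 ∧ u * t = x :=
  ⟨x / t, div_nonneg hx (hx.trans hxt), div_le_one_of_le₀ hxt (hx.trans hxt),
    div_mul_cancel_of_imp fun ht => hx.antisymm' (ht ▸ hxt)⟩

theorem exists_mem_segment_mem_segment {x x' y z z' w : ℝ} (hx : x ≤ x') (hz : z ≤ z') :
    ∃ X : ℝ × ℝ, X ∈ segment ℝ (x', y) (z, w) ∧ X ∈ segment ℝ (x, y) (z', w) := by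
  obtain ⟨t, ht0, ht1, ht⟩ := exists_mul_eq_of_le (x := x' - x) (t := x' - x + (z' - z))
    (sub_nonneg.2 hx) (le_add_of_nonneg_right (sub_nonneg.2 hz))
  refine ⟨((1 - t) * x + t * z', (1 - t) * y + t * w),
    ⟨1 - t, t, sub_nonneg.2 ht1, ht0, sub_add_cancel 1 t, ?_⟩,
    ⟨1 - t, t, sub_nonneg.2 ht1, ht0, sub_add_cancel 1 t, rfl⟩⟩
  ext
  · simp only [Prod.smul_mk, Prod.mk_add_mk, smul_eq_mul]
    linear_combination -ht
  · simp

theorem TiledBy.trapezoid {x x' y z z' w : ℝ} (hyw : y ≠ w) (hx : x ≤ x') (hz : z ≤ z')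
    (h : TiledBy C k (convexHull ℝ {(x', y), (x, y), (z', w)}))
    (h' : TiledBy C l (convexHull ℝ {(z, w), (x, y), (z', w)})) :
    TiledBy C (k + l) (convexHull ℝ {(x', y), (x, y), (z, w), (z', w)}) := by
  obtain ⟨X, hX, hX'⟩ := exists_mem_segment_mem_segment (y := y) (w := w) hx hz
  rw [← convexHull_quadruple_union hX hX']
  have hyw' : 0 < (w - y) ^ 2 := by
    have := sub_ne_zero.2 hyw.symm
    positivity
  refine h.union_convexHull_of_le (-(w - y) ^ 2) ((w - y) * (z' - x))
    ((w - y) * (z' - x) * y - (w - y) ^ 2 * x) (.inl (neg_ne_zero.2 hyw'.ne')) h' ?_ ?_ <;>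
  · simp only [mem_insert_iff, mem_singleton_iff, forall_eq_or_imp, forall_eq]
    refine ⟨?_, ?_, ?_⟩ <;> nlinarith

end Separation

section Regions

/-- The parallelogram with sides `m` along the first axis and `n` along the second one. -/
def box (m n : ℝ) : Set (ℝ × ℝ) := Icc 0 m ×ˢ Icc 0 n

/-- The part below height `h` of the triangle with vertices `(0, 0)`, `(s, 0)` and `(0, s)`:
a trapezoid if `h < s`, the whole triangle if `h = s`. -/
def corner (s h : ℝ) : Set (ℝ × ℝ) := {z | 0 ≤ z.1 ∧ 0 ≤ z.2 ∧ z.2 ≤ h ∧ z.1 + z.2 ≤ s}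

variable {m m' n n' s h h' : ℝ}

theorem mem_box {z : ℝ × ℝ} : z ∈ box m n ↔ (0 ≤ z.1 ∧ z.1 ≤ m) ∧ 0 ≤ z.2 ∧ z.2 ≤ n := Iff.rfl

theorem mem_corner {z : ℝ × ℝ} :
    z ∈ corner s h ↔ 0 ≤ z.1 ∧ 0 ≤ z.2 ∧ z.2 ≤ h ∧ z.1 + z.2 ≤ s := Iff.rfl

theorem mem_vadd_set_prod {p z : ℝ × ℝ} {S : Set (ℝ × ℝ)} :
    z ∈ p +ᵥ S ↔ (z.1 - p.1, z.2 - p.2) ∈ S := by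
  rw [mem_vadd_set_iff_neg_vadd_mem, vadd_eq_add, neg_add_eq_sub, Prod.sub_def]

theorem box_add_left_eq_union (hm : 0 ≤ m) (hm' : 0 ≤ m') :
    box (m + m') n = box m n ∪ ((m, (0 : ℝ)) +ᵥ box m' n) := by
  ext z
  simp only [mem_union, mem_vadd_set_prod, mem_box]
  grind

theorem box_add_right_eq_union (hn : 0 ≤ n) (hn' : 0 ≤ n') :
    box m (n + n') = box m n ∪ (((0 : ℝ), n) +ᵥ box m n') := by
  ext z
  simp only [mem_union, mem_vadd_set_prod, mem_box]
  grind

theorem corner_add_left_eq_union (hm : 0 ≤ m) (hhs : h ≤ s) :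
    corner (m + s) h = box m h ∪ ((m, (0 : ℝ)) +ᵥ corner s h) := by
  ext z
  simp only [mem_union, mem_vadd_set_prod, mem_box, mem_corner]
  grind

theorem corner_add_add_eq_union (hh : 0 ≤ h) (hh' : 0 ≤ h') :
    corner (s + h) (h + h') = corner (s + h) h ∪ (((0 : ℝ), h) +ᵥ corner s h') := by
  ext z
  simp only [mem_union, mem_vadd_set_prod, mem_corner]
  grind

theorem box_eq_convexHull (hm : 0 ≤ m) (hn : 0 ≤ n) :
    box m n = convexHull ℝ {(m, 0), (0, 0), (0, n), (m, n)} := by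
  rw [box, ← segment_eq_Icc hm, ← segment_eq_Icc hn, ← convexHull_pair, ← convexHull_pair,
    ← convexHull_prod]
  congr 1
  ext ⟨x, y⟩
  simp only [mem_prod, mem_insert_iff, mem_singleton_iff, Prod.mk.injEq]
  tauto

theorem convex_corner : Convex ℝ (corner s h) := by
  rintro ⟨x, y⟩ ⟨hx, hy, hyh, hxy⟩ ⟨x', y'⟩ ⟨hx', hy', hyh', hxy'⟩ a b ha hb hab
  simp only [mem_corner, Prod.smul_mk, Prod.mk_add_mk, smul_eq_mul] at *
  refine ⟨?_, ?_, ?_, ?_⟩ <;> nlinarith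

theorem corner_eq_convexHull (hh : 0 ≤ h) (hhs : h ≤ s) :
    corner s h = convexHull ℝ {(0, 0), (s, 0), (s - h, h), (0, h)} := by
  refine Subset.antisymm ?_ (convexHull_min ?_ convex_corner)
  · rintro ⟨x, y⟩ ⟨hx, hy, hyh, hxy⟩
    obtain ⟨v, hv0, hv1, rfl⟩ := exists_mul_eq_of_le hy hyh
    obtain ⟨u, hu0, hu1, rfl⟩ := exists_mul_eq_of_le (t := s - v * h) hx
      (le_sub_right_of_add_le hxy)
    rw [pair_comm (s - h, h), insert_comm (s, (0 : ℝ)), ← convexJoin_segments, mem_convexJoin]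
    refine ⟨(0, v * h), ⟨1 - v, v, sub_nonneg.2 hv1, hv0, sub_add_cancel 1 v, ?_⟩,
      (s - v * h, v * h), ⟨1 - v, v, sub_nonneg.2 hv1, hv0, sub_add_cancel 1 v, ?_⟩,
      1 - u, u, sub_nonneg.2 hu1, hu0, sub_add_cancel 1 u, ?_⟩ <;>
    · ext <;> simp only [Prod.smul_mk, Prod.mk_add_mk, smul_eq_mul] <;> ring
  · simp only [insert_subset_iff, singleton_subset_iff, mem_corner]
    grind

theorem corner_self_eq_convexHull (hs : 0 ≤ s) :
    corner s s = convexHull ℝ {(0, 0), (s, 0), (0, s)} := by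
  rw [corner_eq_convexHull hs le_rfl, sub_self, pair_eq_singleton]

end Regions

section RegionTilings

variable {C : Set (ℝ × ℝ) → Prop} {k l : ℕ} {m m' n n' s h h' : ℝ}

theorem TiledBy.box_add_left (hC : TranslationInvariant C) (hm : 0 ≤ m) (hm' : 0 ≤ m')
    (h₁ : TiledBy C k (box m n)) (h₂ : TiledBy C l (box m' n)) :
    TiledBy C (k + l) (box (m + m') n) := by
  rw [box_add_left_eq_union hm hm']
  refine h₁.union_of_le 1 0 m (by simp) (h₂.vadd hC _) ?_ ?_ <;>
  · simp only [mem_vadd_set_prod, mem_box]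
    grind

theorem TiledBy.box_add_right (hC : TranslationInvariant C) (hn : 0 ≤ n) (hn' : 0 ≤ n')
    (h₁ : TiledBy C k (box m n)) (h₂ : TiledBy C l (box m n')) :
    TiledBy C (k + l) (box m (n + n')) := by
  rw [box_add_right_eq_union hn hn']
  refine h₁.union_of_le 0 1 n (by simp) (h₂.vadd hC _) ?_ ?_ <;>
  · simp only [mem_vadd_set_prod, mem_box]
    grind

theorem TiledBy.corner_add_left (hC : TranslationInvariant C) (hm : 0 ≤ m) (hhs : h ≤ s)
    (h₁ : TiledBy C k (box m h)) (h₂ : TiledBy C l (corner s h)) :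
    TiledBy C (k + l) (corner (m + s) h) := by
  rw [corner_add_left_eq_union hm hhs]
  refine h₁.union_of_le 1 0 m (by simp) (h₂.vadd hC _) ?_ ?_ <;>
  · simp only [mem_vadd_set_prod, mem_box, mem_corner]
    grind

theorem TiledBy.corner_add_add (hC : TranslationInvariant C) (hh : 0 ≤ h) (hh' : 0 ≤ h')
    (h₁ : TiledBy C k (corner (s + h) h)) (h₂ : TiledBy C l (corner s h')) :
    TiledBy C (k + l) (corner (s + h) (h + h')) := by
  rw [corner_add_add_eq_union hh hh']
  refine h₁.union_of_le 0 1 h (by simp) (h₂.vadd hC _) ?_ ?_ <;>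
  · simp only [mem_vadd_set_prod, mem_corner]
    grind

theorem TiledBy.box_natCast_mul_left (hC : TranslationInvariant C) (hm : 0 ≤ m)
    (hb : TiledBy C k (box m n)) {i : ℕ} (hi : 0 < i) : TiledBy C (i * k) (box (i * m) n) := by
  induction i, hi using Nat.le_induction with
  | base => simpa using hb
  | succ i _ ih =>
    rw [Nat.succ_mul, Nat.cast_succ, add_one_mul]
    exact ih.box_add_left hC (by positivity) hm hb

theorem TiledBy.box_natCast_mul_right (hC : TranslationInvariant C) (hn : 0 ≤ n)
    (hb : TiledBy C k (box m n)) {i : ℕ} (hi : 0 < i) : TiledBy C (i * k) (box m (i * n)) := by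
  induction i, hi using Nat.le_induction with
  | base => simpa using hb
  | succ i _ ih =>
    rw [Nat.succ_mul, Nat.cast_succ, add_one_mul]
    exact ih.box_add_right hC (by positivity) hn hb

theorem TiledBy.box_of_diagonal (hm : 0 ≤ m) (hn : 0 < n)
    (hbelow : C (convexHull ℝ {(m, 0), (0, 0), (m, n)}))
    (habove : C (convexHull ℝ {(0, n), (0, 0), (m, n)})) : TiledBy C 2 (box m n) := by
  rw [box_eq_convexHull hm hn.le]
  exact (of_mem hbelow).trapezoid hn.ne hm hm (of_mem habove)

theorem TiledBy.box_of_antidiagonal (hm : 0 ≤ m) (hn : 0 < n)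
    (hbelow : C (convexHull ℝ {(0, 0), (0, n), (m, 0)}))
    (habove : C (convexHull ℝ {(m, n), (0, n), (m, 0)})) : TiledBy C 2 (box m n) := by
  have hbox : box m n = convexHull ℝ {(m, n), (0, n), (0, 0), (m, 0)} := by
    rw [box_eq_convexHull hm hn.le]
    congr 1
    grind
  rw [hbox]
  exact (of_mem habove).trapezoid hn.ne' hm hm (of_mem hbelow)

theorem TiledBy.corner_natCast (hC : TranslationInvariant C)
    (hup : C (convexHull ℝ {(0, 0), (0, 1), (1, 0)}))
    (hdown : C (convexHull ℝ {(1, 1), (0, 1), (1, 0)})) {n : ℕ} (hn : 0 < n) :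
    TiledBy C (n * n) (corner n n) := by
  have hcorner : TiledBy C 1 (corner 1 1) := by
    rw [corner_self_eq_convexHull zero_le_one, pair_comm]
    exact of_mem hup
  have hbox : TiledBy C 2 (box 1 1) := box_of_antidiagonal zero_le_one one_pos hup hdown
  induction n, hn using Nat.le_induction with
  | base => simpa using hcorner
  | succ n hn ih =>
    have hrow : TiledBy C (n * 2 + 1) (corner (n + 1) 1) := by
      simpa using (hbox.box_natCast_mul_left hC zero_le_one hn).corner_add_left hC (by positivity)
        le_rfl hcorner
    convert hrow.corner_add_add hC zero_le_one n.cast_nonneg ih using 1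
    · ring
    · push_cast
      rw [add_comm 1]

theorem TiledBy.corner_of_fan {p q : ℝ} {k₁ k₂ k₃ : ℕ} (hp : 0 ≤ p) (hq : 0 ≤ q) (hh : 0 < h)
    (h₁ : TiledBy C k₁ (convexHull ℝ {(p, h), (p + q + h, 0), (p + q, h)}))
    (h₂ : TiledBy C k₂ (convexHull ℝ {(p + q + h, 0), (0, 0), (p, h)}))
    (h₃ : TiledBy C k₃ (convexHull ℝ {(0, 0), (p, h), (0, h)})) :
    TiledBy C (k₁ + k₂ + k₃) (corner (p + q + h) h) := by
  obtain ⟨u, hu0, hu1, hu⟩ := exists_mul_eq_of_le hp (le_add_of_nonneg_right hq)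
  have hM : ((p, h) : ℝ × ℝ) ∈ segment ℝ (p + q, h) (0, h) :=
    ⟨u, 1 - u, hu0, sub_nonneg.2 hu1, add_sub_cancel u 1, by
      rw [Prod.smul_mk, Prod.smul_mk, Prod.mk_add_mk, smul_eq_mul, hu]
      ext <;> simp only [smul_eq_mul] <;> ring⟩
  obtain ⟨X, hBD, hAM⟩ := exists_mem_segment_mem_segment (x' := p + q + h) (y := 0) (w := h)
    (by positivity) hp
  rw [corner_eq_convexHull hh.le (le_add_of_nonneg_left (by positivity)), add_sub_cancel_right,
    ← convexHull_quadruple_union_triple hM hBD hAM]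
  have hABCM : TiledBy C (k₁ + k₂) (convexHull ℝ {(0, 0), (p + q + h, 0), (p + q, h), (p, h)}) := by
    rw [pair_comm, insert_comm] at h₁
    rw [insert_comm, pair_comm] at h₂
    convert h₁.trapezoid hh.ne' (le_add_of_nonneg_right hq) (by positivity) h₂ using 2
    grind
  refine hABCM.union_convexHull_of_le (-h) p 0 (.inl (neg_ne_zero.2 hh.ne')) h₃ ?_ ?_
  · simp only [mem_insert_iff, mem_singleton_iff, forall_eq_or_imp, forall_eq]
    refine ⟨?_, ?_, ?_, ?_⟩ <;> nlinarith
  · simp only [mem_insert_iff, mem_singleton_iff, forall_eq_or_imp, forall_eq]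
    refine ⟨?_, ?_, ?_⟩ <;> nlinarith

end RegionTilings

section Triangles

open Module

theorem image_convexHull_triple {E F : Type*} [AddCommGroup E] [Module ℝ E]
    [AddCommGroup F] [Module ℝ F] (f : E →ₗ[ℝ] F) (P Q R : E) :
    f '' convexHull ℝ {P, Q, R} = convexHull ℝ {f P, f Q, f R} := by
  rw [f.image_convexHull, image_insert_eq, image_pair]

section NormedSpace

variable {V : Type*} [NormedAddCommGroup V] [NormedSpace ℝ V] {v w : V}

theorem exists_continuousLinearEquiv_prod (hV : finrank ℝ V = 2)
    (hvw : LinearIndependent ℝ ![v, w]) :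
    ∃ e : (ℝ × ℝ) ≃L[ℝ] V, ∀ z, e z = z.1 • v + z.2 • w := by
  have : FiniteDimensional ℝ V := .of_finrank_pos (hV ▸ two_pos)
  let b := basisOfLinearIndependentOfCardEqFinrank hvw (by simp [hV])
  refine ⟨((LinearEquiv.finTwoArrow ℝ ℝ).symm ≪≫ₗ b.equivFun.symm).toContinuousLinearEquiv,
    fun z => ?_⟩
  simp [b, Basis.equivFun_symm_apply]

theorem TiledBy.convexHull_natCast_smul {C : Set V → Prop} (hC : TranslationInvariant C)
    (hV : finrank ℝ V = 2) (hvw : LinearIndependent ℝ ![v, w])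
    (hup : C (convexHull ℝ {0, v, w})) (hdown : C (convexHull ℝ {v + w, v, w})) {n : ℕ}
    (hn : 0 < n) : TiledBy C (n * n) (convexHull ℝ {0, (n : ℝ) • v, (n : ℝ) • w}) := by
  obtain ⟨e, he⟩ := exists_continuousLinearEquiv_prod hV hvw
  have image_triple (p q r : ℝ × ℝ) :
      e '' convexHull ℝ {p, q, r} = convexHull ℝ {e p, e q, e r} :=
    image_convexHull_triple e.toLinearMap p q r
  have hinv : TranslationInvariant fun T => C (e '' T) := by
    intro p T hT
    rw [image_vadd_distrib]
    exact hC _ _ hT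
  have key : TiledBy (fun T => C (e '' T)) (n * n) (corner n n) := by
    refine corner_natCast hinv ?_ ?_ hn
    · rw [image_triple, pair_comm]
      simpa [he] using hup
    · rw [image_triple, pair_comm]
      simpa [he] using hdown
  have himage := key.image e.toHomeomorph fun _ hT => hT
  rw [corner_self_eq_convexHull n.cast_nonneg, e.coe_toHomeomorph, image_triple] at himage
  simpa [he] using himage

theorem linearIndependent_of_norm_sub_lt [StrictConvexSpace ℝ V] (hsub : |‖v‖ - ‖w‖| < ‖v - w‖)
    (hadd : ‖v - w‖ < ‖v‖ + ‖w‖) : LinearIndependent ℝ ![v, w] := by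
  by_contra h
  rcases sameRay_or_sameRay_neg_iff_not_linearIndependent.2 h with h | h
  · exact hsub.ne' h.norm_sub
  · rw [sub_eq_add_neg, h.norm_add, norm_neg] at hadd
    exact hadd.false

end NormedSpace

section InnerProductSpace

variable {V : Type*} [NormedAddCommGroup V] [InnerProductSpace ℝ V] {v w v' w' : V}

theorem norm_smul_add_smul_sq (x y : ℝ) : ‖x • v + y • w‖ ^ 2 =
    x ^ 2 * ‖v‖ ^ 2 + y ^ 2 * ‖w‖ ^ 2 + x * y * (‖v‖ ^ 2 + ‖w‖ ^ 2 - ‖v - w‖ ^ 2) := by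
  rw [norm_add_sq_real, norm_sub_sq_real, norm_smul, norm_smul, real_inner_smul_left,
    real_inner_smul_right, mul_pow, mul_pow, Real.norm_eq_abs, Real.norm_eq_abs, sq_abs, sq_abs]
  ring

theorem exists_linearIsometryEquiv_apply_eq (hV : finrank ℝ V = 2)
    (hvw : LinearIndependent ℝ ![v, w]) (hvw' : LinearIndependent ℝ ![v', w']) (hv : ‖v‖ = ‖v'‖)
    (hw : ‖w‖ = ‖w'‖) (hsub : ‖v - w‖ = ‖v' - w'‖) :
    ∃ L : V ≃ₗᵢ[ℝ] V, L v = v' ∧ L w = w' := by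
  obtain ⟨e, he⟩ := exists_continuousLinearEquiv_prod hV hvw
  obtain ⟨e', he'⟩ := exists_continuousLinearEquiv_prod hV hvw'
  have hnorm (x : V) : ‖e' (e.symm x)‖ = ‖x‖ := by
    obtain ⟨z, rfl⟩ := e.surjective x
    rw [e.symm_apply_apply, he, he', ← sq_eq_sq₀ (norm_nonneg _) (norm_nonneg _),
      norm_smul_add_smul_sq, norm_smul_add_smul_sq, hv, hw, hsub]
  have hev : e.symm v = (1, 0) := e.symm_apply_eq.2 (by simp [he])
  have hew : e.symm w = (0, 1) := e.symm_apply_eq.2 (by simp [he])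
  refine ⟨⟨(e.symm.trans e').toLinearEquiv, hnorm⟩, ?_, ?_⟩
  · change e' (e.symm v) = v'
    simp [hev, he']
  · change e' (e.symm w) = w'
    simp [hew, he']

end InnerProductSpace

variable {a b c : ℝ} {T : Set Plane}

theorem isTriangle_convexHull {P Q R : Plane} (hPQ : dist P Q = c) (hPR : dist P R = b)
    (hQR : dist Q R = a) : IsTriangle a b c (convexHull ℝ {R, P, Q}) :=
  ⟨P, Q, R, hQR, hPR, hPQ, by rw [insert_comm R, pair_comm R]⟩

theorem IsTriangle.exists_eq_vadd (hT : IsTriangle a b c T) :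
    ∃ R v w : Plane, ‖v‖ = b ∧ ‖w‖ = a ∧ ‖v - w‖ = c ∧ T = R +ᵥ convexHull ℝ {0, v, w} := by
  obtain ⟨P, Q, R, hQR, hPR, hPQ, rfl⟩ := hT
  refine ⟨R, P - R, Q - R, by rw [← dist_eq_norm, hPR], by rw [← dist_eq_norm, hQR],
    by rw [sub_sub_sub_cancel_right, ← dist_eq_norm, hPQ], ?_⟩
  rw [← convexHull_vadd, pair_comm, insert_comm]
  simp [vadd_set_insert]

theorem translationInvariant_isTriangle : TranslationInvariant (IsTriangle a b c) := by
  rintro p _ ⟨P, Q, R, hQR, hPR, hPQ, rfl⟩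
  refine ⟨p +ᵥ P, p +ᵥ Q, p +ᵥ R, ?_, ?_, ?_, ?_⟩
  · rwa [dist_vadd_cancel_left]
  · rwa [dist_vadd_cancel_left]
  · rwa [dist_vadd_cancel_left]
  · rw [← convexHull_vadd, vadd_set_insert, vadd_set_insert, vadd_set_singleton]

theorem IsTriangle.tiledBy_natCast_mul (hsub : |b - a| < c) (hadd : c < b + a) {n : ℕ}
    (hn : 0 < n) (hT : IsTriangle (n * a) (n * b) (n * c) T) :
    TiledBy (IsTriangle a b c) (n * n) T := by
  obtain ⟨R, v, w, hv, hw, hvw, rfl⟩ := hT.exists_eq_vadd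
  have hn' : (n : ℝ) ≠ 0 := Nat.cast_ne_zero.2 hn.ne'
  have hnorm {u : Plane} {x : ℝ} (hu : ‖(n : ℝ) • u‖ = n * x) : ‖u‖ = x := by
    rwa [norm_smul, Real.norm_natCast, mul_right_inj' hn'] at hu
  obtain ⟨v, rfl⟩ : ∃ v', v = (n : ℝ) • v' := ⟨(n : ℝ)⁻¹ • v, by rw [smul_inv_smul₀ hn']⟩
  obtain ⟨w, rfl⟩ : ∃ w', w = (n : ℝ) • w' := ⟨(n : ℝ)⁻¹ • w, by rw [smul_inv_smul₀ hn']⟩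
  rw [← smul_sub] at hvw
  replace hv := hnorm hv
  replace hw := hnorm hw
  replace hvw := hnorm hvw
  refine (TiledBy.convexHull_natCast_smul translationInvariant_isTriangle (by simp)
    (linearIndependent_of_norm_sub_lt ?_ ?_) ?_ ?_ hn).vadd translationInvariant_isTriangle R
  · rwa [hv, hw, hvw]
  · rwa [hv, hw, hvw]
  · exact isTriangle_convexHull (by rwa [dist_eq_norm]) (by simpa) (by simpa)
  · rw [pair_comm]
    exact isTriangle_convexHull (by rwa [dist_comm, dist_eq_norm]) (by simpa) (by simpa)

theorem IsTriangle.exists_image_eq {T' : Set Plane} (hsub : |b - a| < c) (hadd : c < b + a)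
    (hT : IsTriangle a b c T) (hT' : IsTriangle a b c T') :
    ∃ g : Plane ≃ᵢ Plane, g '' T = T' := by
  obtain ⟨R, v, w, rfl, rfl, rfl, rfl⟩ := hT.exists_eq_vadd
  obtain ⟨R', v', w', hv, hw, hvw, rfl⟩ := hT'.exists_eq_vadd
  obtain ⟨L, hLv, hLw⟩ := exists_linearIsometryEquiv_apply_eq (by simp)
    (linearIndependent_of_norm_sub_lt hsub hadd)
    (linearIndependent_of_norm_sub_lt (by rwa [hv, hw, hvw]) (by rwa [hv, hw, hvw]))
    hv.symm hw.symm hvw.symm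
  have hL : L '' convexHull ℝ {0, v, w} = convexHull ℝ {0, v', w'} := by
    simpa [hLv, hLw] using image_convexHull_triple L.toLinearMap 0 v w
  refine ⟨((IsometryEquiv.constVAdd (-R)).trans L.toIsometryEquiv).trans
    (IsometryEquiv.constVAdd R'), ?_⟩
  calc _ = R' +ᵥ L '' (-R +ᵥ (R +ᵥ convexHull ℝ {0, v, w})) := by
        rw [← image_vadd (a := R'), ← image_vadd (a := -R), ← image_comp, ← image_comp]
        rfl
    _ = R' +ᵥ convexHull ℝ {0, v', w'} := by rw [neg_vadd_vadd, hL]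

end Triangles

section HexTriangles

/-- The squared length of a vector given by its coordinates in a basis of unit vectors at an angle
of 60 degrees. -/
def hexNormSq (z : ℝ × ℝ) : ℝ := z.1 ^ 2 + z.1 * z.2 + z.2 ^ 2

/-- The analogue of `IsTriangle` in coordinates with respect to a basis of unit vectors at an angle
of 60 degrees, with lengths replaced by their squares. -/
def IsHexTriangle (a b c : ℝ) (T : Set (ℝ × ℝ)) : Prop :=
  ∃ P Q R : ℝ × ℝ, hexNormSq (Q - R) = a ^ 2 ∧ hexNormSq (P - R) = b ^ 2 ∧
    hexNormSq (P - Q) = c ^ 2 ∧ T = convexHull ℝ {P, Q, R}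

/-- The rotation by 120 degrees, in coordinates with respect to a basis of unit vectors at an angle
of 60 degrees. -/
def hexRotation : (ℝ × ℝ) ≃L[ℝ] ℝ × ℝ :=
  LinearEquiv.toContinuousLinearEquiv
    { toFun := fun z => (-z.1 - z.2, z.1)
      invFun := fun z => (z.2, -z.1 - z.2)
      map_add' := fun _ _ => by ext <;> simp only [Prod.fst_add, Prod.snd_add]; ring
      map_smul' := fun _ _ => by
        ext <;> simp only [Prod.smul_fst, Prod.smul_snd, smul_neg, smul_sub, RingHom.id_apply]
      left_inv := fun _ => by simp
      right_inv := fun _ => by ext <;> grind }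

theorem hexRotation_apply (z : ℝ × ℝ) : hexRotation z = (-z.1 - z.2, z.1) := rfl

theorem hexRotation_symm_apply (z : ℝ × ℝ) : hexRotation.symm z = (z.2, -z.1 - z.2) := rfl

variable {a b c : ℝ} {T : Set (ℝ × ℝ)}

theorem IsHexTriangle.image_hexRotation (hT : IsHexTriangle a b c T) :
    IsHexTriangle a b c (hexRotation '' T) := by
  obtain ⟨P, Q, R, hQR, hPR, hPQ, rfl⟩ := hT
  have hnorm (z w : ℝ × ℝ) : hexNormSq (hexRotation z - hexRotation w) = hexNormSq (z - w) := by
    simp only [hexNormSq, hexRotation_apply, Prod.fst_sub, Prod.snd_sub]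
    ring
  exact ⟨hexRotation P, hexRotation Q, hexRotation R, by rw [hnorm, hQR], by rw [hnorm, hPR],
    by rw [hnorm, hPQ], image_convexHull_triple hexRotation.toLinearMap P Q R⟩

theorem translationInvariant_isHexTriangle : TranslationInvariant (IsHexTriangle a b c) := by
  rintro p _ ⟨P, Q, R, hQR, hPR, hPQ, rfl⟩
  refine ⟨p +ᵥ P, p +ᵥ Q, p +ᵥ R, ?_, ?_, ?_, ?_⟩
  · simpa
  · simpa
  · simpa
  · rw [← convexHull_vadd, vadd_set_insert, vadd_set_insert, vadd_set_singleton]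

theorem isHexTriangle_swap : IsHexTriangle b a c = IsHexTriangle a b c := by
  have swap {a b : ℝ} (T : Set (ℝ × ℝ)) : IsHexTriangle a b c T → IsHexTriangle b a c T := by
    rintro ⟨P, Q, R, hQR, hPR, hPQ, rfl⟩
    refine ⟨Q, P, R, hPR, hQR, ?_, by rw [insert_comm]⟩
    rw [← hPQ, hexNormSq, hexNormSq, Prod.fst_sub, Prod.snd_sub, Prod.fst_sub, Prod.snd_sub]
    ring
  exact funext fun T => propext ⟨swap T, swap T⟩

theorem isHexTriangle_convexHull_axes {x y : ℝ} (h : x ^ 2 - x * y + y ^ 2 = c ^ 2) :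
    IsHexTriangle y x c (convexHull ℝ {(0, 0), (x, 0), (0, y)}) := by
  refine ⟨(x, 0), (0, y), (0, 0), ?_, ?_, ?_, by rw [insert_comm, pair_comm (0, 0)]⟩
  · simp [hexNormSq]
  · simp [hexNormSq]
  · simp only [hexNormSq, Prod.fst_sub, Prod.snd_sub, ← h]
    ring

theorem norm_pt (x y : ℝ) : ‖pt x y‖ = √(x ^ 2 + y ^ 2) := by
  simp [pt, EuclideanSpace.norm_eq]

theorem pt_sub_pt (x y x' y' : ℝ) : pt x y - pt x' y' = pt (x - x') (y - y') := by
  ext i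
  fin_cases i <;> simp [pt]

theorem exists_hexChart : ∃ e : (ℝ × ℝ) ≃L[ℝ] Plane, ∀ z, ‖e z‖ ^ 2 = hexNormSq z := by
  set v := pt 1 0
  set w := pt (1 / 2) (√3 / 2)
  have hv : ‖v‖ = 1 := by rw [norm_pt]; norm_num
  have hw : ‖w‖ = 1 := by
    rw [norm_pt, Real.sqrt_eq_one, div_pow √3, Real.sq_sqrt zero_le_three]
    norm_num
  have hvw : ‖v - w‖ = 1 := by
    rw [pt_sub_pt, norm_pt, Real.sqrt_eq_one, zero_sub, neg_sq, div_pow √3,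
      Real.sq_sqrt zero_le_three]
    norm_num
  obtain ⟨e, he⟩ := exists_continuousLinearEquiv_prod (v := v) (w := w) (by simp)
    (linearIndependent_of_norm_sub_lt (by simp [hv, hw, hvw]) (by rw [hv, hw, hvw]; norm_num))
  refine ⟨e, fun z => ?_⟩
  rw [he, norm_smul_add_smul_sq, hv, hw, hvw, hexNormSq]
  ring

variable {e : (ℝ × ℝ) ≃L[ℝ] Plane}

theorem IsHexTriangle.image_chart (he : ∀ z, ‖e z‖ ^ 2 = hexNormSq z) (ha : 0 ≤ a) (hb : 0 ≤ b)
    (hc : 0 ≤ c) (hT : IsHexTriangle a b c T) : IsTriangle a b c (e '' T) := by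
  obtain ⟨P, Q, R, hQR, hPR, hPQ, rfl⟩ := hT
  have hdist {z w : ℝ × ℝ} {x : ℝ} (hx : 0 ≤ x) (h : hexNormSq (z - w) = x ^ 2) :
      dist (e z) (e w) = x := by
    rwa [dist_eq_norm, ← map_sub, ← sq_eq_sq₀ (norm_nonneg _) hx, he]
  exact ⟨e P, e Q, e R, hdist ha hQR, hdist hb hPR, hdist hc hPQ,
    image_convexHull_triple e.toLinearMap P Q R⟩

theorem IsTriangle.image_chart_symm (he : ∀ z, ‖e z‖ ^ 2 = hexNormSq z) {T : Set Plane}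
    (hT : IsTriangle a b c T) : IsHexTriangle a b c (e.symm '' T) := by
  obtain ⟨P, Q, R, rfl, rfl, rfl, rfl⟩ := hT
  have hnorm (x y : Plane) : hexNormSq (e.symm x - e.symm y) = dist x y ^ 2 := by
    rw [← map_sub, ← he, e.apply_symm_apply, dist_eq_norm]
  exact ⟨e.symm P, e.symm Q, e.symm R, hnorm Q R, hnorm P R, hnorm P Q,
    image_convexHull_triple e.symm.toLinearMap P Q R⟩

theorem IsHexTriangle.tiledBy_natCast_mul (ha : 0 ≤ a) (hb : 0 ≤ b) (hsub : |b - a| < c)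
    (hadd : c < b + a) {n : ℕ} (hn : 0 < n) (hT : IsHexTriangle (n * a) (n * b) (n * c) T) :
    TiledBy (IsHexTriangle a b c) (n * n) T := by
  obtain ⟨e, he⟩ := exists_hexChart
  have hc : 0 ≤ c := (abs_nonneg _).trans hsub.le
  have hTe := hT.image_chart he (by positivity) (by positivity) (by positivity)
  have himage := hTe.tiledBy_natCast_mul hsub hadd hn
  simpa [image_image] using himage.image e.symm.toHomeomorph fun U hU => hU.image_chart_symm he

end HexTriangles

section EisensteinTriples

/-- Positive integers `a`, `b`, `c` such that a triangle with side lengths `a`, `b`, `c` has an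
angle of 120 degrees opposite to its side of length `c`. -/
structure IsEisensteinTriple (a b c : ℕ) : Prop where
  left_pos : 0 < a
  right_pos : 0 < b
  sq_eq : c ^ 2 = a ^ 2 + a * b + b ^ 2

namespace IsEisensteinTriple

variable {a b c : ℕ} {P Q R : ℝ × ℝ}

theorem symm (h : IsEisensteinTriple a b c) : IsEisensteinTriple b a c :=
  ⟨h.right_pos, h.left_pos, by rw [h.sq_eq]; ring⟩

theorem hyp_pos (h : IsEisensteinTriple a b c) : 0 < c := by
  have := h.left_pos
  exact pow_pos_iff two_ne_zero |>.1 (h.sq_eq ▸ by positivity)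

theorem cast_sq_eq (h : IsEisensteinTriple a b c) : (c : ℝ) ^ 2 = a ^ 2 + a * b + b ^ 2 :=
  mod_cast h.sq_eq

theorem abs_sub_lt (h : IsEisensteinTriple a b c) : |(b : ℝ) - a| < c := by
  have := h.left_pos
  have := h.right_pos
  refine abs_lt_of_sq_lt_sq ?_ c.cast_nonneg
  rw [h.cast_sq_eq, sub_sq']
  have : (0 : ℝ) < a * b := by positivity
  linarith

theorem lt_add (h : IsEisensteinTriple a b c) : (c : ℝ) < b + a := by
  have := h.left_pos
  have := h.right_pos
  refine lt_of_pow_lt_pow_left₀ 2 (by positivity) ?_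
  rw [h.cast_sq_eq, add_sq]
  have : (0 : ℝ) < a * b := by positivity
  linarith

theorem tiledBy_convexHull (h : IsEisensteinTriple a b c) {n : ℕ} (hn : 0 < n)
    (hQR : hexNormSq (Q - R) = (n * a) ^ 2) (hPR : hexNormSq (P - R) = (n * b) ^ 2)
    (hPQ : hexNormSq (P - Q) = (n * c) ^ 2) :
    TiledBy (IsHexTriangle a b c) (n * n) (convexHull ℝ {P, Q, R}) :=
  IsHexTriangle.tiledBy_natCast_mul a.cast_nonneg b.cast_nonneg h.abs_sub_lt h.lt_add hn
    ⟨P, Q, R, hQR, hPR, hPQ, rfl⟩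

theorem tiledBy_box (h : IsEisensteinTriple a b c) : TiledBy (IsHexTriangle a b c) 2 (box a b) := by
  refine .box_of_diagonal a.cast_nonneg (Nat.cast_pos.2 h.right_pos)
    ⟨(a, b), (0, 0), (a, 0), ?_, ?_, ?_, ?_⟩ ⟨(0, 0), (a, b), (0, b), ?_, ?_, ?_, ?_⟩
  iterate 2
    · simp [hexNormSq]
    · simp [hexNormSq]
    · simp [hexNormSq, h.cast_sq_eq]
    · congr 1
      grind

theorem tiledBy_box_swap (h : IsEisensteinTriple a b c) :
    TiledBy (IsHexTriangle a b c) 2 (box b a) :=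
  isHexTriangle_swap ▸ h.symm.tiledBy_box

theorem tiledBy_corner (h : IsEisensteinTriple a b c) :
    TiledBy (IsHexTriangle a b c) (b * b + c * c + a * a)
      (corner (a ^ 2 + b ^ 2 + a * b) (a * b)) := by
  have ha := h.left_pos
  have hb := h.right_pos
  refine .corner_of_fan (by positivity) (by positivity) (by positivity)
    (h.tiledBy_convexHull hb ?_ ?_ ?_) (h.tiledBy_convexHull h.hyp_pos ?_ ?_ ?_)
    (h.tiledBy_convexHull ha ?_ ?_ ?_)
  all_goals
    simp only [mul_pow, h.cast_sq_eq, hexNormSq, Prod.fst_sub, Prod.snd_sub]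
    ring

theorem tiledBy_strip (h : IsEisensteinTriple a b c) {i j t : ℕ} (hi : 0 < i) (hj : 0 < j)
    (ht : t = i * a + (j * b + (a ^ 2 + b ^ 2))) :
    TiledBy (IsHexTriangle a b c) (2 * t + a * b) (corner (t + a * b) (a * b)) := by
  have hC := translationInvariant_isHexTriangle (a := a) (b := b) (c := c)
  have hbox : TiledBy (IsHexTriangle a b c) (i * (a * 2)) (box (i * a) (a * b)) :=
    (h.tiledBy_box.box_natCast_mul_right hC b.cast_nonneg h.left_pos).box_natCast_mul_left hC
      a.cast_nonneg hi
  have hbox' : TiledBy (IsHexTriangle a b c) (j * (b * 2)) (box (j * b) (b * a)) :=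
    (h.tiledBy_box_swap.box_natCast_mul_right hC a.cast_nonneg h.right_pos).box_natCast_mul_left hC
      b.cast_nonneg hj
  rw [mul_comm (b : ℝ) a] at hbox'
  convert hbox.corner_add_left hC (by positivity) ?_
    (hbox'.corner_add_left hC (by positivity) ?_ h.tiledBy_corner) using 1
  · linarith [h.sq_eq]
  · push_cast [ht]
    ring_nf
  · nlinarith [sq_nonneg (a : ℝ)]
  · nlinarith [sq_nonneg (a : ℝ)]

theorem tiledBy_unit_strip (h : IsEisensteinTriple a b c) (hab : a < b) {n : ℕ}
    (hn : b + a < a * n) :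
    TiledBy (IsHexTriangle a b c) (a * b * (2 * n + 1)) (corner (a * b * (n + 1)) (a * b)) := by
  obtain ⟨i, rfl⟩ := Nat.exists_eq_add_of_lt hab
  obtain ⟨j, hj⟩ := Nat.exists_eq_add_of_lt hn
  convert h.tiledBy_strip (i := i + 1) (j := j + 1) (t := a * (a + i + 1) * n)
    i.succ_pos j.succ_pos ?_ using 1
  · ring
  · push_cast
    ring_nf
  · rw [mul_right_comm, hj]
    ring

theorem tiledBy_trapezoid (h : IsEisensteinTriple a b c) (hab : a < b) {m n : ℕ}
    (hn : b + a < a * n) (hm : 0 < m) :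
    TiledBy (IsHexTriangle a b c) (a * b * (m * (2 * n + m)))
      (corner (a * b * (n + m)) (a * b * m)) := by
  induction m, hm using Nat.le_induction with
  | base => simpa using h.tiledBy_unit_strip hab hn
  | succ m _ ih =>
    have hstrip := h.tiledBy_unit_strip hab (hn.trans_le (Nat.mul_le_mul_left a (n.le_add_right m)))
    rw [Nat.cast_add, mul_add_one (_ : ℝ)] at hstrip
    convert hstrip.corner_add_add translationInvariant_isHexTriangle (by positivity)
      (by positivity) ih using 1
    · ring
    · push_cast
      ring_nf

end IsEisensteinTriple

end EisensteinTriples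

section Pinwheel

variable {C : Set (ℝ × ℝ) → Prop} {s t h h₁ h₂ h₃ : ℝ} {k₁ k₂ k₃ : ℕ} {z : ℝ × ℝ}

theorem mem_vadd_image_hexRotation_corner :
    z ∈ ((s, (0 : ℝ)) +ᵥ hexRotation '' corner t h) ↔
      0 ≤ z.2 ∧ z.1 + z.2 ≤ s ∧ s - h ≤ z.1 + z.2 ∧ s - t ≤ z.1 := by
  rw [mem_vadd_set_prod, hexRotation.image_eq_preimage_symm, mem_preimage, hexRotation_symm_apply,
    mem_corner]
  grind

theorem mem_vadd_image_hexRotation_image_hexRotation_corner :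
    z ∈ (((0 : ℝ), s) +ᵥ hexRotation '' (hexRotation '' corner t h)) ↔
      z.1 + z.2 ≤ s ∧ 0 ≤ z.1 ∧ z.1 ≤ h ∧ s - t ≤ z.2 := by
  rw [mem_vadd_set_prod, hexRotation.image_eq_preimage_symm, hexRotation.image_eq_preimage_symm,
    mem_preimage, mem_preimage, hexRotation_symm_apply, hexRotation_symm_apply, mem_corner]
  grind

theorem TiledBy.corner_of_pinwheel (hC : TranslationInvariant C)
    (hrot : ∀ T, C T → C (hexRotation '' T)) (h₁0 : 0 ≤ h₁) (h₂0 : 0 ≤ h₂) (h₃0 : 0 ≤ h₃)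
    (hT₁ : TiledBy C k₁ (corner (h₃ + h₁) h₁)) (hT₂ : TiledBy C k₂ (corner (h₁ + h₂) h₂))
    (hT₃ : TiledBy C k₃ (corner (h₂ + h₃) h₃)) :
    TiledBy C (k₁ + k₂ + k₃) (corner (h₁ + h₂ + h₃) (h₁ + h₂ + h₃)) := by
  have hrotate {k : ℕ} {S : Set (ℝ × ℝ)} (h : TiledBy C k S) : TiledBy C k (hexRotation '' S) :=
    h.image hexRotation.toHomeomorph hrot
  have key := hT₁.union₃ ((hrotate hT₂).vadd hC (h₁ + h₂ + h₃, 0))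
    ((hrotate (hrotate hT₃)).vadd hC (0, h₁ + h₂ + h₃))
    (disjoint_interior_of_le (α := 1) (β := 1) (γ := h₃ + h₁) (by simp) ?_ ?_)
    (disjoint_interior_of_le (α := 0) (β := 1) (γ := h₁) (by simp) ?_ ?_)
    (disjoint_interior_of_le (α := -1) (β := 0) (γ := -h₃) (by simp) ?_ ?_)
  · convert key using 1
    ext z
    simp only [mem_union, mem_vadd_image_hexRotation_corner,
      mem_vadd_image_hexRotation_image_hexRotation_corner, mem_corner]
    grind
  all_goals
    simp only [mem_vadd_image_hexRotation_corner,
      mem_vadd_image_hexRotation_image_hexRotation_corner, mem_corner]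
    grind

theorem IsEisensteinTriple.tiledBy_equilateral {a b c : ℕ} (h : IsEisensteinTriple a b c)
    (hab : a < b) {l m n : ℕ} (hl : b + a < a * l) (hm : b + a < a * m) (hn : b + a < a * n) :
    TiledBy (IsHexTriangle a b c) (a * b * (l + m + n) ^ 2)
      (corner (a * b * (l + m + n)) (a * b * (l + m + n))) := by
  have trapezoid {l m : ℕ} (hl : b + a < a * l) (hm : b + a < a * m) :
      TiledBy (IsHexTriangle a b c) (a * b * (m * (2 * l + m)))
        (corner (a * b * l + a * b * m) (a * b * m)) := by
    rw [← mul_add]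
    exact h.tiledBy_trapezoid hab hl (Nat.pos_of_mul_pos_left (Nat.zero_lt_of_lt hm))
  convert (trapezoid hn hl).corner_of_pinwheel translationInvariant_isHexTriangle
    (fun _ => IsHexTriangle.image_hexRotation) (by positivity) (by positivity) (by positivity)
    (trapezoid hl hm) (trapezoid hm hn) using 1
  · ring
  · ring_nf

end Pinwheel

section CutCorner

theorem TiledBy.convexHull_of_corner {C : Set (ℝ × ℝ) → Prop} {s p q : ℝ} {k₁ k₂ k₃ k₄ : ℕ}
    (hs : 0 < s) (hp : 0 ≤ p) (hq : 0 ≤ q)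
    (h₁ : TiledBy C k₁ (convexHull ℝ {(2 * s + p, 0), (0, 2 * s + q), (s, s)}))
    (h₂ : TiledBy C k₂ (convexHull ℝ {(2 * s + p, 0), (s, s), (2 * s, 0)}))
    (h₃ : TiledBy C k₃ (convexHull ℝ {(s, s), (0, 2 * s + q), (0, 2 * s)}))
    (h₄ : TiledBy C k₄ (corner (2 * s) (2 * s))) :
    TiledBy C (k₁ + k₂ + k₃ + k₄) (convexHull ℝ {(0, 0), (2 * s + p, 0), (0, 2 * s + q)}) := by
  have hE : ((2 * s, 0) : ℝ × ℝ) ∈ segment ℝ (0, 0) (2 * s + p, 0) := by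
    rw [← Prod.image_mk_segment_left, segment_eq_Icc (by positivity)]
    exact mem_image_of_mem _ ⟨by positivity, by linarith⟩
  have hF : ((0, 2 * s) : ℝ × ℝ) ∈ segment ℝ (0, 0) (0, 2 * s + q) := by
    rw [← Prod.image_mk_segment_right, segment_eq_Icc (by positivity)]
    exact mem_image_of_mem _ ⟨by positivity, by linarith⟩
  have hZ : ((s, s) : ℝ × ℝ) ∈ segment ℝ (2 * s, 0) (0, 2 * s) :=
    ⟨1 / 2, 1 / 2, by norm_num, by norm_num, by norm_num, by ext <;> simp⟩
  rw [corner_self_eq_convexHull (by positivity)] at h₄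
  rw [← convexHull_triple_union_of_cut hE hF hZ]
  -- From the inside out, the separating lines join `(s, s)` to `(2 * s + p, 0)`, to
  -- `(0, 2 * s + q)` and to `(2 * s, 0)`.
  refine .union_of_le (-1) (-1) (-(2 * s)) (.inl (neg_ne_zero.2 one_ne_zero))
    (.union_of_le (-(s + q)) (-s) (-(s * (2 * s + q))) (.inr (neg_ne_zero.2 hs.ne'))
      (h₁.union_convexHull_of_le (-s) (-(s + p)) (-(s * (2 * s + p)))
        (.inl (neg_ne_zero.2 hs.ne')) h₂ ?_ ?_) h₃
      (fun _ => Or.rec (forall_mem_convexHull_le ?_ _) (forall_mem_convexHull_le ?_ _))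
      (forall_mem_convexHull_ge ?_)) h₄
    (fun _ => Or.rec (Or.rec (forall_mem_convexHull_le ?_ _) (forall_mem_convexHull_le ?_ _))
      (forall_mem_convexHull_le ?_ _)) (forall_mem_convexHull_ge ?_)
  all_goals
    simp only [mem_insert_iff, mem_singleton_iff, forall_eq_or_imp, forall_eq]
    refine ⟨?_, ?_, ?_⟩ <;> nlinarith

end CutCorner

section TilesInto

variable {a b c : ℝ} {T : Set Plane}

theorem IsTriangle.image_isometryEquiv (g : Plane ≃ᵢ Plane) (hT : IsTriangle a b c T) :
    IsTriangle a b c (g '' T) := by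
  obtain ⟨P, Q, R, hQR, hPR, hPQ, rfl⟩ := hT
  refine ⟨g P, g Q, g R, by rwa [g.dist_eq], by rwa [g.dist_eq], by rwa [g.dist_eq], ?_⟩
  simpa [image_insert_eq] using
    g.toRealAffineIsometryEquiv.toAffineEquiv.toAffineMap.image_convexHull {P, Q, R}

theorem TiledBy.tilesInto {n : ℕ} {S : Set Plane} (hsub : |b - a| < c) (hadd : c < b + a)
    (hn : 0 < n) (hS : TiledBy (IsTriangle a b c) n S) : TilesInto S n a b c := by
  obtain ⟨ι, _, T, rfl, hT, rfl, hd⟩ := hS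
  obtain ⟨i₀⟩ := Fintype.card_pos_iff.1 hn
  choose g hg using fun i => (hT i₀).exists_image_eq hsub hadd (hT i)
  let e : Fin (Fintype.card ι) ≃ ι := (Fintype.equivFin ι).symm
  refine ⟨fun i => g (e i), T i₀, hT i₀, ?_, fun i j hij => ?_⟩
  · simp only [hg]
    exact (e.surjective.iUnion_comp T).symm
  · simp only [hg]
    exact (hd (e.injective.ne hij)).inter_eq

end TilesInto

section CutTriangle

namespace IsEisensteinTriple

variable {a b c k l m n : ℕ}

theorem tiledBy_cut_triangle (h : IsEisensteinTriple a b c) (hab : a < b) (hl : b + a < a * l)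
    (hm : b + a < a * m) (hn : b + a < a * n) (hk : l + m + n = 2 * k) :
    TiledBy (IsHexTriangle a b c) (k ^ 2 * ((2 * a + b) * (a + 2 * b)))
      (convexHull ℝ
        {(0, 0), ((k * (b * (2 * a + b)) : ℝ), 0), (0, (k * (a * (a + 2 * b)) : ℝ))}) := by
  have ha := h.left_pos
  have hb := h.right_pos
  have hc := h.hyp_pos
  have hk0 : 0 < k := by
    have := Nat.pos_of_mul_pos_left (Nat.zero_lt_of_lt hl)
    omega
  have hcorner := h.tiledBy_equilateral hab hl hm hn
  have hside : (a * b * (l + m + n) : ℝ) = 2 * (a * b * k) := by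
    rw [← Nat.cast_add, ← Nat.cast_add, hk]
    push_cast
    ring
  have hx : (k * (b * (2 * a + b)) : ℝ) = 2 * (a * b * k) + b ^ 2 * k := by ring
  have hy : (k * (a * (a + 2 * b)) : ℝ) = 2 * (a * b * k) + a ^ 2 * k := by ring
  rw [hside, hk] at hcorner
  rw [hx, hy]
  convert TiledBy.convexHull_of_corner (p := b ^ 2 * k) (q := a ^ 2 * k) (by positivity)
    (by positivity) (by positivity)
    (h.tiledBy_convexHull (n := c * k) (by positivity) ?_ ?_ ?_)
    (h.tiledBy_convexHull (n := b * k) (by positivity) ?_ ?_ ?_)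
    (h.tiledBy_convexHull (n := a * k) (by positivity) ?_ ?_ ?_) hcorner using 1
  · linear_combination k ^ 2 * h.sq_eq.symm
  all_goals
    simp only [hexNormSq, Prod.fst_sub, Prod.snd_sub, Nat.cast_mul, mul_pow, h.cast_sq_eq]
    ring

theorem isHexTriangle_cut_triangle (h : IsEisensteinTriple a b c) :
    IsHexTriangle (k * (a * (a + 2 * b))) (k * (b * (2 * a + b))) (k * c ^ 2)
      (convexHull ℝ
        {(0, 0), ((k * (b * (2 * a + b)) : ℝ), 0), (0, (k * (a * (a + 2 * b)) : ℝ))}) := by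
  refine isHexTriangle_convexHull_axes ?_
  rw [mul_pow (k : ℝ) (c ^ 2), h.cast_sq_eq]
  ring

theorem cut_triangle_abs_sub_lt (h : IsEisensteinTriple a b c) (hk : 0 < k) :
    |(k * (b * (2 * a + b)) - k * (a * (a + 2 * b)) : ℝ)| < k * c ^ 2 := by
  have := h.left_pos
  have := h.right_pos
  have hpos : (0 : ℝ) < a * b := by positivity
  rw [← mul_sub, abs_mul, Nat.abs_cast, h.cast_sq_eq]
  gcongr
  rw [abs_lt]
  constructor <;> nlinarith

theorem cut_triangle_lt_add (h : IsEisensteinTriple a b c) (hk : 0 < k) :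
    (k * c ^ 2 : ℝ) < k * (b * (2 * a + b)) + k * (a * (a + 2 * b)) := by
  have := h.left_pos
  have := h.right_pos
  have hpos : (0 : ℝ) < a * b := by positivity
  rw [← mul_add, h.cast_sq_eq]
  exact mul_lt_mul_of_pos_left (by linarith) (Nat.cast_pos.2 hk)

end IsEisensteinTriple

end CutTriangle

theorem stmt10_general (a b c k : ℕ) (h : IsEisensteinTriple a b c) (hab : a < b)
    (hk : 3 * (b / a + 2) ≤ 2 * k) (Δ : Set Plane)
    (hΔ : IsTriangle (k * (a * (a + 2 * b))) (k * (b * (2 * a + b))) (k * c ^ 2) Δ) :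
    TilesInto Δ (k ^ 2 * ((2 * a + b) * (a + 2 * b))) a b c := by
  have ha := h.left_pos
  have hb := h.right_pos
  have hk0 : 0 < k := by linarith [Nat.zero_le (b / a)]
  obtain ⟨n, hn⟩ := Nat.exists_eq_add_of_le hk
  have hl : b + a < a * (b / a + 2) := by linarith [Nat.lt_mul_div_succ b ha]
  have hl' : b + a < a * (b / a + 2 + n) :=
    hl.trans_le (Nat.mul_le_mul_left a (Nat.le_add_right _ n))
  obtain ⟨e, he⟩ := exists_hexChart
  have hcut := (h.isHexTriangle_cut_triangle (k := k)).image_chart he (by positivity)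
    (by positivity) (by positivity)
  obtain ⟨g, rfl⟩ := hcut.exists_image_eq (h.cut_triangle_abs_sub_lt hk0)
    (h.cut_triangle_lt_add hk0) hΔ
  have hmodel := (h.tiledBy_cut_triangle hab hl hl hl' (by rw [hn]; ring)).image e.toHomeomorph
    fun _ hT => IsHexTriangle.image_chart he a.cast_nonneg b.cast_nonneg c.cast_nonneg hT
  exact (hmodel.image g.toHomeomorph fun _ => IsTriangle.image_isometryEquiv g).tilesInto
    h.abs_sub_lt h.lt_add (by positivity)

theorem stmt10 :
    ∀ Δ : Set Plane, IsTriangle 195 275 245 Δ → TilesInto Δ 3575 3 5 7 := fun Δ hΔ =>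
  stmt10_general 3 5 7 5 ⟨by norm_num, by norm_num, by norm_num⟩ (by norm_num) (by norm_num) Δ
    (by convert hΔ <;> norm_num)
end
end

section
/- Let a, b, c be pairwise coprime positive integers with c² = a² + b² + ab, and let m be a positive integer such that the equilateral triangle with side length m·ab tiles into m²·ab congruent copies of the triangle with side lengths (a, b, c). Then the isosceles triangle with side lengths (m·b·c, m·b·c, m·b·(a+2b)) tiles into m²·b·(a+2b) congruent copies of the triangle with side lengths (a, b, c). -/
noncomputable section

/-- The equilateral triangle with side length `X`. -/
def EquilateralTri (X : ℝ) : Set Plane :=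
  convexHull ℝ {pt 0 0, pt X 0, pt (X/2) (X * Real.sqrt 3 / 2)}

/-!
If `E` lies on the base `AB` of an isosceles triangle with apex `C`, then
`CE² = CA² - AE · EB`. Hence, when `c² = a² + b² + ab`, the two points that cut the base of a
triangle with sides `nc, nc, n(a + 2b)` into pieces of lengths `nb, na, nb` are at distance `na`
from the apex: the triangle splits into an equilateral triangle with side `na`, which is tiled by
assumption, and two copies of the tile scaled by `n`. A triangle scaled by `n` splits into `n²`
copies of the original one along lines parallel to its sides; being affine, this dissection need
only be found for one reference triangle.
-/

open Module

section DisjointInteriors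

theorem disjoint_interior_of_forall_le_of_forall_ge {E : Type*} [AddCommGroup E] [Module ℝ E]
    [TopologicalSpace E] [ContinuousAdd E] [ContinuousSMul ℝ E] {f : StrongDual ℝ E} (hf : f ≠ 0)
    {γ : ℝ} {s t : Set E} (hs : ∀ x ∈ s, f x ≤ γ) (ht : ∀ x ∈ t, γ ≤ f x) :
    Disjoint (interior s) (interior t) := by
  rw [Set.disjoint_left]
  intro x hxs hxt
  have himage : f '' interior s ⊆ Set.Iio γ := by
    rw [← interior_Iic]
    exact ((f.isOpenMap_of_ne_zero hf).image_interior_subset s).trans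
      (interior_mono (Set.image_subset_iff.2 hs))
  exact (himage ⟨x, hxs, rfl⟩).not_ge (ht x (interior_subset hxt))

theorem interior_image_affineMap_eq_empty {E F : Type*} [AddCommGroup E] [Module ℝ E]
    [NormedAddCommGroup F] [NormedSpace ℝ F] {f : E →ᵃ[ℝ] F} (hf : ¬ Function.Surjective f)
    (s : Set E) : interior (f '' s) = ∅ := by
  contrapose! hf
  have hspan : affineSpan ℝ (Set.range f) = ⊤ := by
    refine top_unique ?_
    rw [← isOpen_interior.affineSpan_eq_top hf]
    exact affineSpan_mono ℝ (interior_subset.trans (Set.image_subset_range f s))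
  have hrange : ((⊤ : AffineSubspace ℝ E).map f : Set F) = Set.univ := by
    rw [← AffineSubspace.span_univ ℝ E E, AffineSubspace.map_span, Set.image_univ, hspan,
      AffineSubspace.top_coe]
  rwa [AffineSubspace.coe_map, AffineSubspace.top_coe, Set.image_univ, Set.range_eq_univ] at hrange

variable {E F : Type*} [NormedAddCommGroup E] [NormedSpace ℝ E] [FiniteDimensional ℝ E]
  [NormedAddCommGroup F] [NormedSpace ℝ F] [FiniteDimensional ℝ F]

theorem disjoint_interior_image_affineMap (hEF : finrank ℝ E = finrank ℝ F) (f : E →ᵃ[ℝ] F)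
    {s t : Set E} (hst : Disjoint (interior s) (interior t)) :
    Disjoint (interior (f '' s)) (interior (f '' t)) := by
  by_cases hf : Function.Surjective f
  · have hbij : Function.Bijective f := by
      rw [← f.linear_bijective_iff]
      have := f.linear_surjective_iff.2 hf
      exact ⟨(LinearMap.injective_iff_surjective_of_finrank_eq_finrank hEF).2 this, this⟩
    let e : E ≃ₜ F :=
      (AffineEquiv.ofBijective hbij).toContinuousAffineEquiv.toHomeomorph
    have himage (u : Set E) : interior (f '' u) = f '' interior u := (e.image_interior u).symm
    rw [himage, himage]
    exact Set.disjoint_image_of_injective hbij.injective hst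
  · simp only [interior_image_affineMap_eq_empty hf, Set.empty_disjoint]

end DisjointInteriors

section Cevian

theorem segment_eq_union_of_mem {E : Type*} [AddCommGroup E] [Module ℝ E] {A B D : E}
    (hD : D ∈ segment ℝ A B) : segment ℝ A B = segment ℝ A D ∪ segment ℝ D B := by
  refine subset_antisymm ?_ (Set.union_subset ?_ ?_)
  · have hD' : D ∈ Set.range (AffineMap.lineMap A B : ℝ → E) := by
      rw [segment_eq_image_lineMap] at hD
      exact Set.image_subset_range _ _ hD
    rw [← openSegment_subset_iff_segment_subset (Set.mem_union_left _ (left_mem_segment ℝ A D))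
      (Set.mem_union_right _ (right_mem_segment ℝ D B))]
    exact (openSegment_subset_union A B hD').trans
      (Set.insert_subset (Set.mem_union_left _ (right_mem_segment ℝ A D)) (Set.union_subset_union
        (openSegment_subset_segment ℝ A D) (openSegment_subset_segment ℝ D B)))
  · exact (convex_segment A B).segment_subset (left_mem_segment ℝ A B) hD
  · exact (convex_segment A B).segment_subset hD (right_mem_segment ℝ A B)

theorem convexHull_triple_eq_union {E : Type*} [AddCommGroup E] [Module ℝ E] {A B D : E}
    (hD : D ∈ segment ℝ A B) (C : E) :
    convexHull ℝ {A, B, C} = convexHull ℝ {A, D, C} ∪ convexHull ℝ {D, B, C} := by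
  simp only [← convexJoin_segment_singleton, segment_eq_union_of_mem hD, convexJoin_union_left]

variable {E : Type*} [NormedAddCommGroup E] [NormedSpace ℝ E]

theorem exists_strongDual_ne_zero_apply_eq [FiniteDimensional ℝ E] (hE : 1 < finrank ℝ E)
    (x y : E) : ∃ f : StrongDual ℝ E, f ≠ 0 ∧ f x = f y := by
  have hspan : finrank ℝ (ℝ ∙ (x - y)) < finrank ℝ E :=
    (finrank_span_le_card ({x - y} : Set E)).trans_lt (by simpa using hE)
  obtain ⟨f, hf, hker⟩ := Submodule.exists_le_ker_of_lt_top _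
    (Submodule.lt_top_of_finrank_lt_finrank hspan)
  refine ⟨f.toContinuousLinearMap, by simpa using hf, ?_⟩
  simpa [sub_eq_zero] using hker (Submodule.mem_span_singleton_self (x - y))

theorem disjoint_interior_convexHull_triple [FiniteDimensional ℝ E] (hE : 1 < finrank ℝ E)
    {A B D : E} (hD : D ∈ segment ℝ A B) (C : E) :
    Disjoint (interior (convexHull ℝ {A, D, C})) (interior (convexHull ℝ {D, B, C})) := by
  obtain ⟨f, hf, hCD⟩ := exists_strongDual_ne_zero_apply_eq hE C D
  wlog hAB : f A ≤ f B generalizing f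
  · exact this (-f) (neg_ne_zero.2 hf) (by simpa using hCD) (by simpa using (not_le.1 hAB).le)
  obtain ⟨hAD, hDB⟩ : f D ∈ Set.Icc (f A) (f B) := by
    rw [← segment_eq_Icc hAB]
    have hfD := Set.mem_image_of_mem f.toLinearMap.toAffineMap hD
    rwa [image_segment] at hfD
  refine disjoint_interior_of_forall_le_of_forall_ge hf (γ := f D)
    (convexHull_min ?_ (convex_halfSpace_le f.isLinear (f D)))
    (convexHull_min ?_ (convex_halfSpace_ge f.isLinear (f D)))
  · rintro _ (rfl | rfl | rfl)
    exacts [hAD, le_refl (f _), hCD.le]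
  · rintro _ (rfl | rfl | rfl)
    exacts [le_refl (f _), hDB, hCD.ge]

end Cevian

section Congruence

open scoped Congruent

variable {V P : Type*} [NormedAddCommGroup V] [InnerProductSpace ℝ V] [MetricSpace P]
  [NormedAddTorsor V P]

theorem exists_affineIsometryEquiv_apply_eq (x y : P) :
    ∃ g : P ≃ᵃⁱ[ℝ] P, g x = y ∧ ∀ z, dist z x = dist z y → g z = z := by
  have : Nonempty (AffineSubspace.perpBisector x y) :=
    AffineSubspace.perpBisector_nonempty.to_subtype
  have : (AffineSubspace.perpBisector x y).direction.HasOrthogonalProjection := by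
    rw [AffineSubspace.direction_perpBisector]
    infer_instance
  refine ⟨EuclideanGeometry.reflection (AffineSubspace.perpBisector x y), ?_, fun z hz => ?_⟩
  · have horth : x -ᵥ midpoint ℝ x y ∈ (AffineSubspace.perpBisector x y).directionᗮ := by
      rw [AffineSubspace.direction_perpBisector, left_vsub_midpoint, ← neg_vsub_eq_vsub_rev y x]
      exact Submodule.le_orthogonal_orthogonal _
        (Submodule.smul_mem _ _ (neg_mem (Submodule.mem_span_singleton_self _)))
    have hreflection := EuclideanGeometry.reflection_orthogonal_vadd
      (AffineSubspace.midpoint_mem_perpBisector x y) horth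
    rwa [vsub_vadd, neg_vsub_eq_vsub_rev, midpoint_vsub_left, ← right_vsub_midpoint,
      vsub_vadd] at hreflection
  · rw [EuclideanGeometry.reflection_eq_self_iff]
    exact AffineSubspace.mem_perpBisector_iff_dist_eq.2 hz

theorem exists_affineIsometryEquiv_apply_eq_of_congruent {ι : Type*} [Finite ι] {v w : ι → P}
    (h : v ≅ w) : ∃ g : P ≃ᵃⁱ[ℝ] P, ∀ i, g (v i) = w i := by
  classical
  have := Fintype.ofFinite ι
  suffices ∀ s : Finset ι, ∃ g : P ≃ᵃⁱ[ℝ] P, ∀ i ∈ s, g (v i) = w i by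
    simpa using this Finset.univ
  intro s
  induction s using Finset.induction_on with
  | empty => exact ⟨.refl ℝ P, by simp⟩
  | insert j s _ ih =>
    obtain ⟨g, hg⟩ := ih
    obtain ⟨k, hkj, hk⟩ := exists_affineIsometryEquiv_apply_eq (g (v j)) (w j)
    refine ⟨g.trans k, fun i hi => ?_⟩
    obtain rfl | hi := Finset.mem_insert.1 hi
    · exact hkj
    · have hdist : dist (w i) (g (v j)) = dist (w i) (w j) := by
        rw [← hg i hi, g.dist_map, h.dist_eq, hg i hi]
      rw [AffineIsometryEquiv.coe_trans, Function.comp_apply, hg i hi, hk _ hdist]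

end Congruence

theorem IsTriangle.image {p q r : ℝ} {S : Set Plane} (hS : IsTriangle p q r S)
    (g : Plane ≃ᵢ Plane) : IsTriangle p q r (g '' S) := by
  obtain ⟨P, Q, R, rfl, rfl, rfl, rfl⟩ := hS
  refine ⟨g P, g Q, g R, g.dist_eq Q R, g.dist_eq P R, g.dist_eq P Q, ?_⟩
  have hconv := g.toRealAffineIsometryEquiv.toAffineEquiv.toAffineMap.image_convexHull {P, Q, R}
  simpa [Set.image_insert_eq] using hconv

theorem IsTriangle.exists_image_eq_s13 {p q r : ℝ} {S T : Set Plane} (hS : IsTriangle p q r S)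
    (hT : IsTriangle p q r T) : ∃ g : Plane ≃ᵢ Plane, g '' S = T := by
  obtain ⟨P, Q, R, hQR, hPR, hPQ, rfl⟩ := hS
  obtain ⟨P', Q', R', hQR', hPR', hPQ', rfl⟩ := hT
  obtain ⟨g, hg⟩ := exists_affineIsometryEquiv_apply_eq_of_congruent
    (EuclideanGeometry.side_side_side (a := P) (b := Q) (c := R) (a' := P') (b' := Q') (c' := R')
      (hPQ.trans hPQ'.symm) (hQR.trans hQR'.symm)
      (by rw [dist_comm, hPR, dist_comm, hPR']))
  obtain ⟨hP, hQ, hR⟩ : g P = P' ∧ g Q = Q' ∧ g R = R' := ⟨hg 0, hg 1, hg 2⟩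
  have hconv := g.toAffineEquiv.toAffineMap.image_convexHull {P, Q, R}
  refine ⟨g.toIsometryEquiv, ?_⟩
  simpa [Set.image_insert_eq, hP, hQ, hR] using hconv

section Dissections

/-- The set `S` is the union of `N` sets satisfying `IsTile` whose interiors are pairwise
disjoint. -/
def DissectsInto {X : Type*} [TopologicalSpace X] (IsTile : Set X → Prop) (S : Set X) (N : ℕ) :
    Prop :=
  ∃ t : Fin N → Set X, (∀ i, IsTile (t i)) ∧ S = ⋃ i, t i ∧
    Pairwise fun i j => Disjoint (interior (t i)) (interior (t j))

variable {X Y : Type*} [TopologicalSpace X] [TopologicalSpace Y] {IsTile : Set X → Prop}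
  {S T : Set X} {M N : ℕ}

theorem DissectsInto.of_isTile (hS : IsTile S) : DissectsInto IsTile S 1 :=
  ⟨fun _ => S, fun _ => hS, (Set.iUnion_const S).symm, Subsingleton.pairwise⟩

theorem DissectsInto.union (hS : DissectsInto IsTile S M) (hT : DissectsInto IsTile T N)
    (hST : Disjoint (interior S) (interior T)) : DissectsInto IsTile (S ∪ T) (M + N) := by
  obtain ⟨s, hs, rfl, hsdisj⟩ := hS
  obtain ⟨t, ht, rfl, htdisj⟩ := hT
  have hcross (i : Fin M) (j : Fin N) : Disjoint (interior (s i)) (interior (t j)) :=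
    hST.mono (interior_mono (Set.subset_iUnion s i)) (interior_mono (Set.subset_iUnion t j))
  refine ⟨Fin.append s t, ?_, ?_, ?_⟩
  · simpa only [Fin.forall_fin_add, Fin.append_left, Fin.append_right] using ⟨hs, ht⟩
  · rw [← finSumFinEquiv.surjective.iUnion_comp, Set.iUnion_sum]
    simp
  · intro i j
    induction i using Fin.addCases <;> induction j using Fin.addCases
    · simpa using fun h => @hsdisj _ _ h
    · simp [hcross]
    · simpa using fun _ => (hcross _ _).symm
    · simpa using fun h => @htdisj _ _ h

theorem DissectsInto.image {IsTile' : Set Y → Prop} (hS : DissectsInto IsTile S N) {f : X → Y}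
    (hf : ∀ s t, Disjoint (interior s) (interior t) →
      Disjoint (interior (f '' s)) (interior (f '' t)))
    (htile : ∀ s, IsTile s → IsTile' (f '' s)) : DissectsInto IsTile' (f '' S) N := by
  obtain ⟨t, ht, rfl, hdisj⟩ := hS
  exact ⟨fun i => f '' t i, fun i => htile _ (ht i), Set.image_iUnion,
    fun i j hij => hf _ _ (hdisj hij)⟩

theorem DissectsInto.of_inter_le_of_inter_ge {E : Type*} [AddCommGroup E] [Module ℝ E]
    [TopologicalSpace E] [ContinuousAdd E] [ContinuousSMul ℝ E] {IsTile : Set E → Prop} {S : Set E}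
    {f : StrongDual ℝ E} (hf : f ≠ 0) (γ : ℝ)
    (hle : DissectsInto IsTile (S ∩ {x | f x ≤ γ}) M)
    (hge : DissectsInto IsTile (S ∩ {x | γ ≤ f x}) N) : DissectsInto IsTile S (M + N) := by
  have hunion : S ∩ {x | f x ≤ γ} ∪ S ∩ {x | γ ≤ f x} = S := by
    rw [← Set.inter_union_distrib_left, Set.inter_eq_left]
    exact fun x _ => le_total (f x) γ
  rw [← hunion]
  exact hle.union hge (disjoint_interior_of_forall_le_of_forall_ge hf (fun _ hx => hx.2)
    fun _ hx => hx.2)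

theorem DissectsInto.convexHull_triple {E : Type*} [NormedAddCommGroup E] [NormedSpace ℝ E]
    [FiniteDimensional ℝ E] (hE : 1 < finrank ℝ E) {IsTile : Set E → Prop} {A B C D : E}
    (hD : D ∈ segment ℝ A B) (hADC : DissectsInto IsTile (convexHull ℝ {A, D, C}) M)
    (hDBC : DissectsInto IsTile (convexHull ℝ {D, B, C}) N) :
    DissectsInto IsTile (convexHull ℝ {A, B, C}) (M + N) := by
  rw [convexHull_triple_eq_union hD]
  exact hADC.union hDBC (disjoint_interior_convexHull_triple hE hD C)

end Dissections

theorem TilesInto.dissectsInto {p q r : ℝ} {S : Set Plane} {N : ℕ} (h : TilesInto S N p q r) :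
    DissectsInto (IsTriangle p q r) S N := by
  obtain ⟨f, Δ, hΔ, hS, hdisj⟩ := h
  exact ⟨fun i => f i '' Δ, fun i => hΔ.image (f i), hS, fun i j hij =>
    Set.disjoint_iff_inter_eq_empty.2 (hdisj i j hij)⟩

theorem DissectsInto.tilesInto {p q r : ℝ} {S : Set Plane} {N : ℕ} (hN : 0 < N)
    (h : DissectsInto (IsTriangle p q r) S N) : TilesInto S N p q r := by
  obtain ⟨t, ht, hS, hdisj⟩ := h
  choose f hf using fun i => (ht ⟨0, hN⟩).exists_image_eq_s13 (ht i)
  refine ⟨f, t ⟨0, hN⟩, ht _, ?_, fun i j hij => ?_⟩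
  · simpa only [hf] using hS
  · simpa only [hf] using (hdisj hij).inter_eq

theorem DissectsInto.congr_isTriangle {p q r p' q' r' : ℝ} {S T : Set Plane} {N : ℕ}
    (h : DissectsInto (IsTriangle p q r) S N) (hS : IsTriangle p' q' r' S)
    (hT : IsTriangle p' q' r' T) : DissectsInto (IsTriangle p q r) T N := by
  obtain ⟨g, rfl⟩ := hS.exists_image_eq_s13 hT
  refine h.image (fun s t hst => ?_) fun s hs => hs.image g
  exact disjoint_interior_image_affineMap rfl
    g.toRealAffineIsometryEquiv.toAffineEquiv.toAffineMap hst

section Grid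

theorem mem_convexHull_triple_iff {E : Type*} [AddCommGroup E] [Module ℝ E] {A B C x : E} :
    x ∈ convexHull ℝ {A, B, C} ↔
      ∃ s t : ℝ, 0 ≤ s ∧ 0 ≤ t ∧ s + t ≤ 1 ∧ A + s • (B - A) + t • (C - A) = x := by
  constructor
  · rw [← convexJoin_singleton_segment, convexJoin_singleton_left, Set.mem_iUnion₂]
    rintro ⟨_, ⟨p, q, hp, hq, hpq, rfl⟩, k, l, hk, hl, hkl, rfl⟩
    refine ⟨l * p, l * q, by positivity, by positivity, ?_, ?_⟩
    · rw [← mul_add, hpq]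
      linarith
    · obtain rfl : k = 1 - l := by linarith
      obtain rfl : q = 1 - p := by linarith
      module
  · rintro ⟨s, t, hs, ht, hst, rfl⟩
    refine mem_convexHull_of_exists_fintype ![1 - s - t, s, t] ![A, B, C] ?_ ?_ ?_ ?_
    · simp only [Fin.forall_fin_succ, Matrix.cons_val_zero, sub_nonneg, Matrix.cons_val_succ, hs,
        Matrix.cons_val_fin_one, ht, implies_true, and_self, and_true]
      linarith
    · simp only [Fin.sum_univ_three, Matrix.cons_val]
      ring
    · simp [Fin.forall_fin_succ]
    · simp only [Fin.sum_univ_three, Matrix.cons_val]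
      module

/-- The right isosceles triangle with legs `r` along the coordinate directions and right angle
at `u`; for negative `r` it is turned by `π` about `u`. -/
def cornerTriangle (u : ℝ × ℝ) (r : ℝ) : Set (ℝ × ℝ) :=
  convexHull ℝ {u, u + r • (1, 0), u + r • (0, 1)}

theorem mem_cornerTriangle_iff {u x : ℝ × ℝ} {r : ℝ} (hr : r ≠ 0) :
    x ∈ cornerTriangle u r ↔ 0 ≤ (x.1 - u.1) / r ∧ 0 ≤ (x.2 - u.2) / r ∧
      (x.1 - u.1) / r + (x.2 - u.2) / r ≤ 1 := by
  rw [cornerTriangle, mem_convexHull_triple_iff]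
  constructor
  · rintro ⟨s, t, hs, ht, hst, rfl⟩
    simp [hr, hs, ht, hst]
  · rintro ⟨hs, ht, hst⟩
    refine ⟨_, _, hs, ht, hst, ?_⟩
    ext <;> simp [div_mul_cancel₀ _ hr]

theorem mem_cornerTriangle_iff_of_pos {u x : ℝ × ℝ} {r : ℝ} (hr : 0 < r) :
    x ∈ cornerTriangle u r ↔ u.1 ≤ x.1 ∧ u.2 ≤ x.2 ∧ x.1 + x.2 ≤ u.1 + u.2 + r := by
  rw [mem_cornerTriangle_iff hr.ne', ← add_div, div_le_one hr, le_div_iff₀ hr, le_div_iff₀ hr]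
  grind

theorem mem_cornerTriangle_neg_one_iff {u x : ℝ × ℝ} :
    x ∈ cornerTriangle u (-1) ↔ x.1 ≤ u.1 ∧ x.2 ≤ u.2 ∧ u.1 + u.2 - 1 ≤ x.1 + x.2 := by
  rw [mem_cornerTriangle_iff (by norm_num)]
  grind

/-- A triangle of the grid obtained by cutting every unit square along its antidiagonal. The
corner may be any point of the plane, not only a lattice point. -/
def IsGridTriangle (s : Set (ℝ × ℝ)) : Prop :=
  ∃ u, s = cornerTriangle u 1 ∨ s = cornerTriangle u (-1)

theorem dissectsInto_unitSquare (u : ℝ × ℝ) :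
    DissectsInto IsGridTriangle (Set.Icc u (u + 1)) 2 := by
  refine DissectsInto.of_inter_le_of_inter_ge (M := 1) (N := 1) (f := .fst ℝ ℝ ℝ + .snd ℝ ℝ ℝ) ?_
    (u.1 + u.2 + 1) (.of_isTile ⟨u, .inl ?_⟩) (.of_isTile ⟨u + 1, .inr ?_⟩)
  · exact fun h => by simpa using DFunLike.congr_fun h (1, 0)
  · ext x
    simp only [Set.mem_inter_iff, Set.mem_Icc, Prod.le_def, Prod.fst_add, Prod.fst_one,
      Prod.snd_add, Prod.snd_one, Set.mem_ofPred_eq, add_apply, ContinuousLinearMap.coe_fst',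
      ContinuousLinearMap.coe_snd', mem_cornerTriangle_iff_of_pos zero_lt_one]
    grind
  · ext x
    simp only [Set.mem_inter_iff, Set.mem_Icc, Prod.le_def, Prod.fst_add, Prod.fst_one,
      Prod.snd_add, Prod.snd_one, Set.mem_ofPred_eq, add_apply, ContinuousLinearMap.coe_fst',
      ContinuousLinearMap.coe_snd', mem_cornerTriangle_neg_one_iff]
    grind

/-- The strip of width one along the vertical leg of `cornerTriangle u (n + 1)`. -/
def cornerStrip (u : ℝ × ℝ) (n : ℕ) : Set (ℝ × ℝ) :=
  {x | u.1 ≤ x.1 ∧ x.1 ≤ u.1 + 1 ∧ u.2 ≤ x.2 ∧ x.1 + x.2 ≤ u.1 + u.2 + n + 1}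

theorem dissectsInto_cornerStrip (u : ℝ × ℝ) (n : ℕ) :
    DissectsInto IsGridTriangle (cornerStrip u n) (2 * n + 1) := by
  induction n generalizing u with
  | zero =>
    refine .of_isTile ⟨u, .inl ?_⟩
    ext x
    simp only [cornerStrip, Nat.cast_zero, Set.mem_ofPred_eq,
      mem_cornerTriangle_iff_of_pos zero_lt_one]
    grind
  | succ n ih =>
    have hsquare : cornerStrip u (n + 1) ∩ {x | ContinuousLinearMap.snd ℝ ℝ ℝ x ≤ u.2 + 1} =
        Set.Icc u (u + 1) := by
      ext x
      simp only [cornerStrip, Nat.cast_succ, ContinuousLinearMap.coe_snd', Set.mem_inter_iff,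
        Set.mem_ofPred_eq, Set.mem_Icc, Prod.le_def, Prod.fst_add, Prod.fst_one, Prod.snd_add,
        Prod.snd_one]
      grind
    have hstrip : cornerStrip u (n + 1) ∩ {x | u.2 + 1 ≤ ContinuousLinearMap.snd ℝ ℝ ℝ x} =
        cornerStrip (u.1, u.2 + 1) n := by
      ext x
      simp only [cornerStrip, Nat.cast_succ, ContinuousLinearMap.coe_snd', Set.mem_inter_iff,
        Set.mem_ofPred_eq]
      grind
    rw [show 2 * (n + 1) + 1 = 2 + (2 * n + 1) by ring]
    refine .of_inter_le_of_inter_ge (f := .snd ℝ ℝ ℝ) ?_ (u.2 + 1) ?_ ?_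
    · exact fun h => by simpa using DFunLike.congr_fun h (0, 1)
    · exact hsquare ▸ dissectsInto_unitSquare u
    · exact hstrip ▸ ih _

theorem dissectsInto_cornerTriangle (u : ℝ × ℝ) {n : ℕ} (hn : 1 ≤ n) :
    DissectsInto IsGridTriangle (cornerTriangle u n) (n ^ 2) := by
  induction n, hn using Nat.le_induction generalizing u with
  | base => exact .of_isTile ⟨u, .inl (by simp)⟩
  | succ n hn ih =>
    have hn' : (0 : ℝ) < n := by exact_mod_cast hn
    have hstrip : cornerTriangle u (n + 1 : ℕ) ∩ {x | ContinuousLinearMap.fst ℝ ℝ ℝ x ≤ u.1 + 1} =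
        cornerStrip u n := by
      ext x
      rw [Set.mem_inter_iff, mem_cornerTriangle_iff_of_pos (by positivity)]
      simp only [cornerStrip, Nat.cast_succ, ContinuousLinearMap.coe_fst', Set.mem_ofPred_eq]
      grind
    have htriangle : cornerTriangle u (n + 1 : ℕ) ∩
        {x | u.1 + 1 ≤ ContinuousLinearMap.fst ℝ ℝ ℝ x} = cornerTriangle (u.1 + 1, u.2) n := by
      ext x
      rw [Set.mem_inter_iff, mem_cornerTriangle_iff_of_pos (by positivity),
        mem_cornerTriangle_iff_of_pos hn']
      simp only [Nat.cast_succ, ContinuousLinearMap.coe_fst', Set.mem_ofPred_eq]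
      grind
    rw [show (n + 1) ^ 2 = (2 * n + 1) + n ^ 2 by ring]
    refine .of_inter_le_of_inter_ge (f := .fst ℝ ℝ ℝ) ?_ (u.1 + 1) ?_ ?_
    · exact fun h => by simpa using DFunLike.congr_fun h (1, 0)
    · exact hstrip ▸ dissectsInto_cornerStrip u n
    · exact htriangle ▸ ih _

end Grid

section Homothety

theorem dist_affineMap_add_smul {E F : Type*} [AddCommGroup E] [Module ℝ E]
    [NormedAddCommGroup F] [NormedSpace ℝ F] (f : E →ᵃ[ℝ] F) (u x y : E) (r : ℝ) :
    dist (f (u + r • x)) (f (u + r • y)) = |r| * dist (f.linear x) (f.linear y) := by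
  rw [add_comm u, add_comm u, ← vadd_eq_add, ← vadd_eq_add, f.map_vadd, f.map_vadd,
    dist_vadd_cancel_right, map_smul, map_smul, dist_smul₀, Real.norm_eq_abs]

theorem isTriangle_image_cornerTriangle (f : ℝ × ℝ →ᵃ[ℝ] Plane) (u : ℝ × ℝ) {r : ℝ}
    (hr : |r| = 1) :
    IsTriangle (dist (f.linear (1, 0)) (f.linear (0, 1))) (dist 0 (f.linear (0, 1)))
      (dist 0 (f.linear (1, 0))) (f '' cornerTriangle u r) := by
  have hdist (x y : ℝ × ℝ) := dist_affineMap_add_smul f u x y r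
  simp only [hr, one_mul] at hdist
  refine ⟨f u, f (u + r • (1, 0)), f (u + r • (0, 1)), hdist _ _, ?_, ?_, ?_⟩
  · simpa using hdist 0 (0, 1)
  · simpa using hdist 0 (1, 0)
  · rw [cornerTriangle, f.image_convexHull, Set.image_insert_eq, Set.image_pair]

theorem IsTriangle.exists_image_cornerTriangle_eq {p q r n : ℝ} {T : Set Plane}
    (hT : IsTriangle (n * p) (n * q) (n * r) T) (hn : 0 < n) :
    ∃ f : ℝ × ℝ →ᵃ[ℝ] Plane, f '' cornerTriangle 0 n = T ∧
      dist (f.linear (1, 0)) (f.linear (0, 1)) = p ∧ dist 0 (f.linear (0, 1)) = q ∧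
      dist 0 (f.linear (1, 0)) = r := by
  obtain ⟨P, Q, R, hp, hq, hr, rfl⟩ := hT
  let L : ℝ × ℝ →ₗ[ℝ] Plane := (LinearMap.toSpanSingleton ℝ Plane (n⁻¹ • (Q - P))).coprod
    (LinearMap.toSpanSingleton ℝ Plane (n⁻¹ • (R - P)))
  let f : ℝ × ℝ →ᵃ[ℝ] Plane := L.toAffineMap + AffineMap.const ℝ (ℝ × ℝ) P
  have hP : f (0 + n • 0) = P := by simp [f]
  have hQ : f (0 + n • (1, 0)) = Q := by simp [f, L, hn.ne']
  have hR : f (0 + n • (0, 1)) = R := by simp [f, L, hn.ne']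
  have hdist (x y : ℝ × ℝ) := dist_affineMap_add_smul f 0 x y n
  rw [abs_of_pos hn] at hdist
  refine ⟨f, ?_, ?_, ?_, ?_⟩
  · rw [cornerTriangle, f.image_convexHull, Set.image_insert_eq, Set.image_pair, hQ, hR, ← hP,
      smul_zero, add_zero]
  · exact mul_left_cancel₀ hn.ne' (by rw [← hdist, hQ, hR, hp])
  · exact mul_left_cancel₀ hn.ne' (by rw [← map_zero f.linear, ← hdist, hP, hR, hq])
  · exact mul_left_cancel₀ hn.ne' (by rw [← map_zero f.linear, ← hdist, hP, hQ, hr])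

theorem IsTriangle.dissectsInto_sq {p q r : ℝ} {n : ℕ} (hn : 1 ≤ n) {T : Set Plane}
    (hT : IsTriangle (n * p) (n * q) (n * r) T) : DissectsInto (IsTriangle p q r) T (n ^ 2) := by
  obtain ⟨f, rfl, rfl, rfl, rfl⟩ := hT.exists_image_cornerTriangle_eq (by exact_mod_cast hn)
  refine (dissectsInto_cornerTriangle 0 hn).image
    (fun s t hst => disjoint_interior_image_affineMap (by simp) f hst) ?_
  rintro _ ⟨u, rfl | rfl⟩
  · exact isTriangle_image_cornerTriangle f u abs_one
  · exact isTriangle_image_cornerTriangle f u (by simp)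

end Homothety

section Isosceles

theorem exists_wbtw_dist_eq {V P : Type*} [SeminormedAddCommGroup V] [NormedSpace ℝ V]
    [PseudoMetricSpace P] [NormedAddTorsor V P] {A B : P} {s t : ℝ} (hs : 0 ≤ s) (ht : 0 ≤ t)
    (hAB : dist A B = s + t) : ∃ D, Wbtw ℝ A D B ∧ dist A D = s ∧ dist D B = t := by
  have hwbtw : Wbtw ℝ A (AffineMap.lineMap A B (s / (s + t))) B :=
    ⟨s / (s + t), ⟨by positivity, div_le_one_of_le₀ (by linarith) (by positivity)⟩, rfl⟩
  have hleft : dist A (AffineMap.lineMap A B (s / (s + t))) = s := by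
    rw [dist_left_lineMap, hAB, Real.norm_of_nonneg (by positivity)]
    exact div_mul_cancel_of_imp fun h => by linarith
  exact ⟨_, hwbtw, hleft, by linarith [hwbtw.dist_add_dist]⟩

variable {V P : Type*} [NormedAddCommGroup V] [InnerProductSpace ℝ V] [MetricSpace P]
  [NormedAddTorsor V P]

theorem dist_sq_eq_of_wbtw_of_dist_eq {A B C D : P} (hD : Wbtw ℝ A D B)
    (hC : dist A C = dist B C) : dist D C ^ 2 = dist A C ^ 2 - dist A D * dist D B := by
  have hle : dist D C ^ 2 ≤ dist B C ^ 2 := by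
    gcongr
    simpa [hC, dist_comm] using hD.dist_le_max_dist C
  have hmul := EuclideanGeometry.mul_dist_eq_abs_sub_sq_dist hD.mem_affineSpan hC
  rw [abs_of_nonneg (sub_nonneg.2 hle), dist_comm B D] at hmul
  rw [hmul, hC]
  ring

theorem exists_trisection_of_isosceles {A B C : P} {a b c : ℝ} (ha : 0 ≤ a) (hb : 0 ≤ b)
    (h : c ^ 2 = a ^ 2 + b ^ 2 + a * b) (hAC : dist A C = c) (hBC : dist B C = c)
    (hAB : dist A B = a + 2 * b) :
    ∃ D E, Wbtw ℝ A D B ∧ Wbtw ℝ D E B ∧ dist A D = b ∧ dist D E = a ∧ dist E B = b ∧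
      dist D C = a ∧ dist E C = a := by
  obtain ⟨D, hD, hAD, hDB⟩ := exists_wbtw_dist_eq hb (add_nonneg ha hb)
    (hAB.trans (by ring : _ = b + (a + b)))
  obtain ⟨E, hE, hDE, hEB⟩ := exists_wbtw_dist_eq ha hb hDB
  have hAE : dist A E = a + b := by linarith [(hD.trans_right hE).dist_add_dist]
  refine ⟨D, E, hD, hE, hAD, hDE, hEB, ?_, ?_⟩
  · rw [← sq_eq_sq₀ dist_nonneg ha, dist_sq_eq_of_wbtw_of_dist_eq hD (hAC.trans hBC.symm), hAC,
      hAD, hDB, h]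
    ring
  · rw [← sq_eq_sq₀ dist_nonneg ha,
      dist_sq_eq_of_wbtw_of_dist_eq (hD.trans_right hE) (hAC.trans hBC.symm), hAC, hAE, hEB, h]
    ring

end Isosceles

theorem dist_pt_sq (x y x' y' : ℝ) :
    dist (pt x y) (pt x' y') ^ 2 = (x - x') ^ 2 + (y - y') ^ 2 := by
  simp [pt, EuclideanSpace.dist_sq_eq, Fin.sum_univ_two, Real.dist_eq]

theorem isTriangle_equilateralTri {X : ℝ} (hX : 0 ≤ X) : IsTriangle X X X (EquilateralTri X) := by
  have hsqrt : √3 ^ 2 = 3 := Real.sq_sqrt (by norm_num)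
  refine ⟨_, _, _, ?_, ?_, ?_, rfl⟩ <;> rw [← sq_eq_sq₀ dist_nonneg hX, dist_pt_sq]
  · linear_combination X ^ 2 / 4 * hsqrt
  · linear_combination X ^ 2 / 4 * hsqrt
  · ring

theorem stmt13_general {a b c : ℝ} (ha : 0 ≤ a) (hb : 0 ≤ b) (h : c ^ 2 = a ^ 2 + b ^ 2 + a * b)
    {n N : ℕ} (hn : 0 < n) (heq : TilesInto (EquilateralTri (n * a)) N a b c) {Δ : Set Plane}
    (hΔ : IsTriangle (n * c) (n * c) (n * (a + 2 * b)) Δ) :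
    TilesInto Δ (N + 2 * n ^ 2) a b c := by
  obtain ⟨P, Q, R, hQR, hPR, hPQ, rfl⟩ := hΔ
  obtain ⟨D, E, hD, hE, hPD, hDE, hEQ, hDR, hER⟩ := exists_trisection_of_isosceles
    (a := n * a) (b := n * b) (by positivity) (by positivity) (by linear_combination n ^ 2 * h)
    hPR hQR (hPQ.trans (by ring))
  have hPDR : DissectsInto (IsTriangle a b c) (convexHull ℝ {P, D, R}) (n ^ 2) :=
    IsTriangle.dissectsInto_sq hn
      ⟨P, R, D, by rwa [dist_comm], hPD, hPR, by rw [Set.pair_comm]⟩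
  have hDER : DissectsInto (IsTriangle a b c) (convexHull ℝ {D, E, R}) N :=
    heq.dissectsInto.congr_isTriangle (isTriangle_equilateralTri (by positivity))
      ⟨D, E, R, hER, hDR, hDE, rfl⟩
  have hEQR : DissectsInto (IsTriangle a b c) (convexHull ℝ {E, Q, R}) (n ^ 2) :=
    IsTriangle.dissectsInto_sq hn
      ⟨Q, R, E, by rwa [dist_comm], by rwa [dist_comm], hQR,
        by rw [Set.insert_comm, Set.pair_comm]⟩
  have hcount : N + 2 * n ^ 2 = n ^ 2 + (N + n ^ 2) := by ring
  refine DissectsInto.tilesInto (by positivity) (hcount ▸ ?_)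
  exact .convexHull_triple (by simp) (mem_segment_iff_wbtw.2 hD) hPDR
    (.convexHull_triple (by simp) (mem_segment_iff_wbtw.2 hE) hDER hEQR)

theorem stmt13 (a b c : ℕ) (ha : 0 < a) (hb : 0 < b) (hc : 0 < c)
    (hab : Nat.Coprime a b) (hac : Nat.Coprime a c) (hbc : Nat.Coprime b c)
    (h : c ^ 2 = a ^ 2 + b ^ 2 + a * b) (m : ℕ) (hm : 0 < m)
    (heq : TilesInto (EquilateralTri ((m : ℝ) * a * b)) (m ^ 2 * a * b) a b c) :
    ∀ Δ : Set Plane,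
      IsTriangle ((m : ℝ) * b * c) ((m : ℝ) * b * c) ((m : ℝ) * b * (a + 2 * b)) Δ →
      TilesInto Δ (m ^ 2 * b * (a + 2 * b)) a b c := by
  intro Δ hΔ
  have hcount : m ^ 2 * b * (a + 2 * b) = m ^ 2 * a * b + 2 * (m * b) ^ 2 := by ring
  rw [hcount]
  refine stmt13_general (a := a) (b := b) (c := c) (n := m * b) (by positivity) (by positivity)
    (by exact_mod_cast h) (by positivity) ?_ ?_
  · simpa only [Nat.cast_mul, mul_right_comm] using heq
  · simpa only [Nat.cast_mul] using hΔ
end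
end
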